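/- Let R be a Cohen–Macaulay local ring. Then the assignments X ↦ V(X) and Φ ↦ V^{-1}(Φ) give mutually inverse bijections between the set of resolving subcategories of mod R that are closed under tensor products and closed under transposes, and the set of specialization-closed subsets of Spec R contained in s(R). -/

import Mathlib

/-!
Let `stabAnn R M` be the ideal of scalars `s` such that multiplication by `s` on `M` factors through
a finitely generated free module. The nonfree locus of `M` is the closed set defined by this ideal
(`mem_nonfreeLocus_iff`), and stable annihilators behave well, up to products, under direct
summands, extensions, kernels of epimorphisms, tensor products and transposes. This shows that
`V(𝒳)` is specialization-closed and that `V⁻¹(Φ)` is resolving and closed under tensor products and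
transposes. Since `R ⧸ p` is not free at `p` when `R_p` is not a field,
`V(V⁻¹(Φ)) = Φ` for `Φ ⊆ s(R)`.

The main point is the inclusion `V⁻¹(V(𝒳)) ⊆ 𝒳`. It follows from two facts.

(i) If `R ⧸ q ∈ 𝒳` for all `q ∈ V(M)`, then `M ∈ 𝒳` (`IsResolving.mem_of_nonfreeLocus`). If
`t ∈ stabAnn R C`, then `C` is a direct summand of the pushout of a free cover `0 → K → F → C → 0`
along multiplication by `t` on `K`. Iterating this over (powers of) generators of `stabAnn R M`
embeds `M` as a direct summand of a module built by syzygies and extensions from modules supported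
in `V(M)`; such modules have filtrations with factors `R ⧸ q`, `q ∈ V(M)`.

(ii) `R ⧸ p ∈ 𝒳` for every `p ∈ V(𝒳)` (`IsResolving.quotient_mem`), by Noetherian induction, so that
`R ⧸ q ∈ 𝒳` may be assumed for the primes `q` strictly above `p`.
Pushouts along elements of `p` produce `X ∈ 𝒳` whose nonfree locus is the closure of `p`
(`IsResolving.exists_radical_stabAnn`). The module `Tor₁(tr X, X)` lies in `𝒳` and has annihilator
`stabAnn R X` (`exists_annihilator_eq_stabAnn`), which leads to a module of `𝒳` that is killed by a
power of `p` and not free at `p` (`exists_level`). After discarding modules that vanish at `p`, it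
yields an exact sequence `0 → K → F → C → 0` in `𝒳` with `F` free, `K ⊆ p F` and `K` nonzero at `p`
(`IsResolving.exists_cover`). Choosing `Z ∈ 𝒳` nonzero at `p` and killed by the smallest possible
power of `p`, and replacing it by a suitable submodule, the map `K ⊗ Z → F ⊗ Z` becomes zero
(`IsResolving.exists_killed`). Let `E` be the pushout of `K ^ r → F ^ r` along
`(t₁, …, t_r) : K ^ r → K`, with `tᵢ` generating `p`. Then `(K ⊗ Z) ⧸ p (K ⊗ Z)` is a direct summand
of `E ⊗ Z ∈ 𝒳` (`IsResolving.quotient_tensor_mem`). It is killed by `p` and nonzero at `p`, so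
`R ⧸ p ∈ 𝒳` follows.
-/

open TensorProduct

noncomputable section

/-- The nonfree locus of a module: primes where the localization is a nonfree module. -/
def nonfreeLocus (R : Type) [CommRing R] (M : Type) [AddCommGroup M] [Module R M] :
    Set (PrimeSpectrum R) :=
  {p | ¬ Module.Free (Localization.AtPrime p.asIdeal) (LocalizedModule p.asIdeal.primeCompl M)}

/-- The nonfree locus of a subcategory of `mod R`. -/
def catNonfreeLocus (R : Type) [CommRing R] (𝒳 : Set (ModuleCat.{0} R)) :
    Set (PrimeSpectrum R) :=
  ⋃ M ∈ 𝒳, nonfreeLocus R M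

/-- A resolving subcategory of the category of finitely generated `R`-modules:
closed under isomorphism, consisting of finitely generated modules, containing `R`,
closed under direct summands, extensions and kernels of epimorphisms. -/
structure IsResolving (R : Type) [CommRing R] (𝒳 : Set (ModuleCat.{0} R)) : Prop where
  fg : ∀ M ∈ 𝒳, Module.Finite R M
  mem_of_iso : ∀ M N : ModuleCat.{0} R, Nonempty (M ≃ₗ[R] N) → M ∈ 𝒳 → N ∈ 𝒳
  ring_mem : ModuleCat.of R R ∈ 𝒳
  summand_mem : ∀ M N : ModuleCat.{0} R,
    (∃ (i : N →ₗ[R] M) (p : M →ₗ[R] N), p ∘ₗ i = LinearMap.id) → M ∈ 𝒳 → N ∈ 𝒳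
  extension_mem : ∀ (L M N : ModuleCat.{0} R) (f : L →ₗ[R] M) (g : M →ₗ[R] N),
    Function.Injective f → Function.Surjective g → Function.Exact f g →
      L ∈ 𝒳 → N ∈ 𝒳 → M ∈ 𝒳
  ker_epi_mem : ∀ (L M N : ModuleCat.{0} R) (f : L →ₗ[R] M) (g : M →ₗ[R] N),
    Function.Injective f → Function.Surjective g → Function.Exact f g →
      M ∈ 𝒳 → N ∈ 𝒳 → L ∈ 𝒳

/-- Membership in the additive closure `add 𝒴` of a subcategory `𝒴` of `mod S`:
direct summands of finite direct sums of modules in `𝒴`. -/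
def memAdd (S : Type) [CommRing S] (𝒴 : Set (ModuleCat.{0} S)) (N : Type)
    [AddCommGroup N] [Module S N] : Prop :=
  ∃ (n : ℕ) (Y : Fin n → ModuleCat.{0} S), (∀ i, Y i ∈ 𝒴) ∧
    ∃ (s : N →ₗ[S] ((i : Fin n) → Y i)) (r : ((i : Fin n) → Y i) →ₗ[S] N),
      r ∘ₗ s = LinearMap.id

/-- The subcategory `𝒳_p` of `mod R_p` consisting of localizations of modules in `𝒳`. -/
def locCat (R : Type) [CommRing R] (𝒳 : Set (ModuleCat.{0} R)) (p : PrimeSpectrum R) :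
    Set (ModuleCat.{0} (Localization.AtPrime p.asIdeal)) :=
  {N | ∃ X ∈ 𝒳, Nonempty
    (N ≃ₗ[Localization.AtPrime p.asIdeal] LocalizedModule p.asIdeal.primeCompl X)}

/-- `κ(p) ∈ add_{R_p} 𝒳_p`. -/
def kappaMemAdd (R : Type) [CommRing R] (𝒳 : Set (ModuleCat.{0} R)) (p : PrimeSpectrum R) :
    Prop :=
  memAdd (Localization.AtPrime p.asIdeal) (locCat R 𝒳 p)
    (IsLocalRing.ResidueField (Localization.AtPrime p.asIdeal))

/-- A specialization-closed subset of `Spec R`. -/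
def SpecClosed (R : Type) [CommRing R] (Φ : Set (PrimeSpectrum R)) : Prop :=
  ∀ p ∈ Φ, ∀ q : PrimeSpectrum R, p.asIdeal ≤ q.asIdeal → q ∈ Φ

/-- `s(R)`: the set of primes `p` such that `R_p` is not a field. -/
def nonFieldLocus (R : Type) [CommRing R] : Set (PrimeSpectrum R) :=
  {p | ¬ IsField (Localization.AtPrime p.asIdeal)}

/-- A (Noetherian) local ring is regular iff its maximal ideal is generated by
`dim` many elements. -/
def IsRegularLoc (A : Type) [CommRing A] [IsLocalRing A] : Prop :=
  ∃ (n : ℕ) (x : Fin n → A), ringKrullDim A = (n : ℕ) ∧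
    Ideal.span (Set.range x) = IsLocalRing.maximalIdeal A

/-- The singular locus of `R`. -/
def singLocus (R : Type) [CommRing R] : Set (PrimeSpectrum R) :=
  {p | ¬ IsRegularLoc (Localization.AtPrime p.asIdeal)}

/-- `V^{-1}(Φ)`: finitely generated modules whose nonfree locus is contained in `Φ`. -/
def Vinv (R : Type) [CommRing R] (Φ : Set (PrimeSpectrum R)) : Set (ModuleCat.{0} R) :=
  {M | Module.Finite R M ∧ nonfreeLocus R M ⊆ Φ}

/-- The depth of a module: supremum of lengths of regular sequences in the maximal ideal. -/
def seqDepth (R : Type) [CommRing R] [IsLocalRing R] (M : Type) [AddCommGroup M]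
    [Module R M] : ℕ∞ :=
  sSup {n : ℕ∞ | ∃ rs : List R, (rs.length : ℕ∞) = n ∧
    (∀ r ∈ rs, r ∈ IsLocalRing.maximalIdeal R) ∧ RingTheory.Sequence.IsRegular M rs}

/-- A local ring is Cohen–Macaulay if its depth equals its Krull dimension. -/
def IsCMLocalRing (R : Type) [CommRing R] [IsLocalRing R] : Prop :=
  (seqDepth R R : WithBot ℕ∞) = ringKrullDim R

/-- A module over a local ring is Cohen–Macaulay ("maximal Cohen–Macaulay") if its depth
equals the Krull dimension of the ring. -/
def IsCMModule (R : Type) [CommRing R] [IsLocalRing R] (M : Type) [AddCommGroup M]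
    [Module R M] : Prop :=
  (seqDepth R M : WithBot ℕ∞) = ringKrullDim R

/-- The subcategory `CM(R)` of `mod R` of (maximal) Cohen–Macaulay modules. -/
def CMcat (R : Type) [CommRing R] [IsLocalRing R] : Set (ModuleCat.{0} R) :=
  {M | Module.Finite R M ∧ IsCMModule R M}

/-- `V_CM^{-1}(Φ)`: Cohen–Macaulay modules whose nonfree locus is contained in `Φ`. -/
def VinvCM (R : Type) [CommRing R] [IsLocalRing R] (Φ : Set (PrimeSpectrum R)) :
    Set (ModuleCat.{0} R) :=
  {M | Module.Finite R M ∧ IsCMModule R M ∧ nonfreeLocus R M ⊆ Φ}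

/-- `IsSyzygyOf R n M S` : `S` is an `n`-th syzygy of `M` in a minimal free resolution,
i.e. `S ≅ Ω^n M`. -/
def IsSyzygyOf (R : Type) [CommRing R] [IsLocalRing R] :
    ℕ → ModuleCat.{0} R → ModuleCat.{0} R → Prop
  | 0, M, S => Nonempty (S ≃ₗ[R] M)
  | n + 1, M, S => ∃ (m : ℕ) (π : (Fin m → R) →ₗ[R] M), Function.Surjective π ∧
      LinearMap.ker π ≤ (IsLocalRing.maximalIdeal R) • (⊤ : Submodule R (Fin m → R)) ∧
      IsSyzygyOf R n (ModuleCat.of R (LinearMap.ker π)) S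

/-- `IsTransposeOf R X M T` : `T` is (isomorphic to) the transpose `tr_X M` of `M`
with respect to `X`, computed from a minimal free presentation of `M`. -/
def IsTransposeOf (R : Type) [CommRing R] [IsLocalRing R] (X : Type) [AddCommGroup X]
    [Module R X] (M : Type) [AddCommGroup M] [Module R M] (T : Type) [AddCommGroup T]
    [Module R T] : Prop :=
  ∃ (n m : ℕ) (dl : (Fin n → R) →ₗ[R] (Fin m → R)) (π : (Fin m → R) →ₗ[R] M),
    Function.Surjective π ∧ Function.Exact dl π ∧
    LinearMap.ker π ≤ (IsLocalRing.maximalIdeal R) • (⊤ : Submodule R (Fin m → R)) ∧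
    LinearMap.ker dl ≤ (IsLocalRing.maximalIdeal R) • (⊤ : Submodule R (Fin n → R)) ∧
    Nonempty (T ≃ₗ[R]
      (((Fin n → R) →ₗ[R] X) ⧸ LinearMap.range (LinearMap.lcomp R X dl)))

/-- `𝒳` is closed under tensor products. -/
def ClosedUnderTensor (R : Type) [CommRing R] (𝒳 : Set (ModuleCat.{0} R)) : Prop :=
  ∀ X ∈ 𝒳, ∀ Y ∈ 𝒳, ModuleCat.of R (TensorProduct R X Y) ∈ 𝒳

/-- `𝒳` is closed under (Auslander) transposes. -/
def ClosedUnderTranspose (R : Type) [CommRing R] [IsLocalRing R]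
    (𝒳 : Set (ModuleCat.{0} R)) : Prop :=
  ∀ M ∈ 𝒳, ∀ T : ModuleCat.{0} R, IsTransposeOf R R M T → T ∈ 𝒳


/-- The subcategory `add R` of direct summands of finitely generated free modules. -/
def addRCat (R : Type) [CommRing R] : Set (ModuleCat.{0} R) :=
  {M | ∃ (n : ℕ) (i : M →ₗ[R] (Fin n → R)) (p : (Fin n → R) →ₗ[R] M),
    p ∘ₗ i = LinearMap.id}

/-- A thick subcategory of `CM(R)`: closed under isomorphisms and direct summands, and
satisfying two-out-of-three for short exact sequences of Cohen-Macaulay modules. -/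
structure IsThickCM (R : Type) [CommRing R] [IsLocalRing R]
    (𝒳 : Set (ModuleCat.{0} R)) : Prop where
  subset_cm : 𝒳 ⊆ CMcat R
  mem_of_iso : ∀ M N : ModuleCat.{0} R, Nonempty (M ≃ₗ[R] N) → M ∈ 𝒳 → N ∈ 𝒳
  summand_mem : ∀ M N : ModuleCat.{0} R,
    (∃ (i : N →ₗ[R] M) (p : M →ₗ[R] N), p ∘ₗ i = LinearMap.id) → M ∈ 𝒳 → N ∈ 𝒳
  two_of_three : ∀ (L M N : ModuleCat.{0} R), L ∈ CMcat R → M ∈ CMcat R → N ∈ CMcat R →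
    ∀ (f : L →ₗ[R] M) (g : M →ₗ[R] N),
      Function.Injective f → Function.Surjective g → Function.Exact f g →
        ((L ∈ 𝒳 → M ∈ 𝒳 → N ∈ 𝒳) ∧ (L ∈ 𝒳 → N ∈ 𝒳 → M ∈ 𝒳) ∧ (M ∈ 𝒳 → N ∈ 𝒳 → L ∈ 𝒳))

/-- A local ring with infinite residue field has minimal multiplicity iff the square of the
maximal ideal equals `Q * m` for a parameter ideal `Q = (x_1, …, x_d)` generated by
`d = dim` many elements of `m`. -/
def HasMinimalMultiplicity (A : Type) [CommRing A] [IsLocalRing A] : Prop :=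
  ∃ (n : ℕ) (x : Fin n → A), ringKrullDim A = (n : ℕ) ∧
    (∀ i, x i ∈ IsLocalRing.maximalIdeal A) ∧
    (IsLocalRing.maximalIdeal A) ^ 2 =
      Ideal.span (Set.range x) * IsLocalRing.maximalIdeal A

/-! ### Stable annihilators and nonfree loci -/

section StabAnn

variable {R : Type} [CommRing R]
variable {M N P : Type} [AddCommGroup M] [Module R M] [AddCommGroup N] [Module R N]
  [AddCommGroup P] [Module R P]

variable (R M) in
/-- The annihilator of the stable endomorphism ring of `M`: those scalars `s` for which
multiplication by `s` on `M` factors through a finitely generated free module. -/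
def stabAnn : Ideal R :=
  (LinearMap.range (dualTensorHom R M M)).comap
    (LinearMap.toSpanSingleton R (M →ₗ[R] M) LinearMap.id)

theorem mem_stabAnn {s : R} :
    s ∈ stabAnn R M ↔ s • (LinearMap.id : M →ₗ[R] M) ∈ LinearMap.range (dualTensorHom R M M) :=
  Iff.rfl

theorem dualTensorHom_map {M' N' : Type} [AddCommGroup M'] [Module R M'] [AddCommGroup N']
    [Module R N'] (f : M' →ₗ[R] M) (g : N →ₗ[R] N') (u : Module.Dual R M ⊗[R] N) :
    dualTensorHom R M' N' (TensorProduct.map f.dualMap g u) = g ∘ₗ dualTensorHom R M N u ∘ₗ f := by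
  induction u with
  | zero => simp
  | tmul x y => ext; simp [dualTensorHom_apply]
  | add x y hx hy => simp only [map_add, hx, hy, LinearMap.add_comp, LinearMap.comp_add]

theorem comp_mem_range_dualTensorHom [Module.Finite R P] [Module.Projective R P]
    (f : M →ₗ[R] P) (g : P →ₗ[R] N) : g ∘ₗ f ∈ LinearMap.range (dualTensorHom R M N) := by
  obtain ⟨u, hu⟩ := (dualTensorHom_bijective (R := R) (M := P) (N := P)).2 LinearMap.id
  exact ⟨TensorProduct.map f.dualMap g u, by rw [dualTensorHom_map, hu, LinearMap.id_comp]⟩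

theorem mem_stabAnn_of_factor [Module.Finite R P] [Module.Projective R P] {s : R}
    (f : M →ₗ[R] P) (g : P →ₗ[R] M) (h : ∀ x, g (f x) = s • x) : s ∈ stabAnn R M := by
  rw [mem_stabAnn]
  convert comp_mem_range_dualTensorHom f g using 1
  ext x; simp [h]

theorem exists_factor_of_mem_stabAnn {s : R} (hs : s ∈ stabAnn R M) :
    ∃ (ι : Type) (_ : Fintype ι) (f : M →ₗ[R] (ι → R)) (g : (ι → R) →ₗ[R] M),
      ∀ x, g (f x) = s • x := by
  obtain ⟨u, hu⟩ := mem_stabAnn.1 hs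
  obtain ⟨S, hS⟩ := TensorProduct.exists_finset u
  refine ⟨S, inferInstance, LinearMap.pi fun i => i.1.1,
    Fintype.linearCombination R (fun i : S => i.1.2), fun x => ?_⟩
  have h := LinearMap.congr_fun hu x
  rw [hS, map_sum, LinearMap.sum_apply] at h
  simp only [dualTensorHom_apply, LinearMap.smul_apply, LinearMap.id_apply] at h
  rw [← h, Fintype.linearCombination_apply]
  exact Finset.sum_coe_sort S (fun i => i.1 x • i.2)

/-- If multiplication by `r` on `M` factors through `N`, then `stabAnn R N` times `r` lies in
`stabAnn R M`. -/
theorem mem_stabAnn_of_comp {r s : R} (i : M →ₗ[R] N) (q : N →ₗ[R] M) (h : ∀ x, q (i x) = r • x)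
    (hs : s ∈ stabAnn R N) : s * r ∈ stabAnn R M := by
  obtain ⟨ι, _, f, g, hfg⟩ := exists_factor_of_mem_stabAnn hs
  refine mem_stabAnn_of_factor (f ∘ₗ i) (q ∘ₗ g) fun x => ?_
  simp [hfg, h, mul_smul]

theorem exists_lift_of_mem_stabAnn {s : R} (hs : s ∈ stabAnn R N) (π : M →ₗ[R] N)
    (hπ : Function.Surjective π) : ∃ σ : N →ₗ[R] M, ∀ x, π (σ x) = s • x := by
  obtain ⟨ι, _, f, g, hfg⟩ := exists_factor_of_mem_stabAnn hs
  obtain ⟨g', hg'⟩ := Module.projective_lifting_property π g hπ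
  exact ⟨g' ∘ₗ f, fun x => by rw [← hfg, ← hg']; rfl⟩

theorem stabAnn_of_projective [Module.Finite R P] [Module.Projective R P] (s : R) :
    s ∈ stabAnn R P :=
  mem_stabAnn_of_factor (P := P) LinearMap.id (s • LinearMap.id) fun _ => rfl

theorem mem_stabAnn_of_annihilator {s : R} (hs : s ∈ Module.annihilator R M) :
    s ∈ stabAnn R M :=
  mem_stabAnn_of_factor (P := PUnit) 0 0 fun x => by
    rw [Module.mem_annihilator.1 hs x]; rfl

/-- If `s` is in the stable annihilator of the third term of a short exact sequence, then the
sequence splits up to `s`. -/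
theorem exists_splitting {L : Type} [AddCommGroup L] [Module R L] (f : L →ₗ[R] M) (g : M →ₗ[R] N)
    (hf : Function.Injective f) (hg : Function.Surjective g) (hfg : Function.Exact f g) {s : R}
    (hs : s ∈ stabAnn R N) :
    ∃ (σ : N →ₗ[R] M) (ρ : M →ₗ[R] L), (∀ x, g (σ x) = s • x) ∧ (∀ x, ρ (f x) = s • x) ∧
      ∀ x, f (ρ x) + σ (g x) = s • x := by
  obtain ⟨σ, hσ⟩ := exists_lift_of_mem_stabAnn hs g hg
  have hmem : ∀ x, (s • LinearMap.id - σ ∘ₗ g : M →ₗ[R] M) x ∈ LinearMap.range f := fun x => by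
    rw [LinearMap.mem_range]
    exact (hfg _).1 (by simp [hσ])
  let e := LinearEquiv.ofInjective f hf
  let ρ : M →ₗ[R] L := e.symm ∘ₗ LinearMap.codRestrict (LinearMap.range f) _ hmem
  have hρ : ∀ x, f (ρ x) = s • x - σ (g x) := fun x => by
    simp [e, ρ]
  refine ⟨σ, ρ, hσ, fun x => hf ?_, fun x => by rw [hρ]; abel⟩
  rw [hρ, hfg.apply_apply_eq_zero]; simp

theorem stabAnn_ker {L : Type} [AddCommGroup L] [Module R L] (f : L →ₗ[R] M) (g : M →ₗ[R] N)
    (hf : Function.Injective f) (hg : Function.Surjective g) (hfg : Function.Exact f g) {s t : R}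
    (hs : s ∈ stabAnn R N) (ht : t ∈ stabAnn R M) : t * s ∈ stabAnn R L := by
  obtain ⟨σ, ρ, -, hρ, -⟩ := exists_splitting f g hf hg hfg hs
  exact mem_stabAnn_of_comp f ρ hρ ht

theorem stabAnn_ext {L : Type} [AddCommGroup L] [Module R L] (f : L →ₗ[R] M) (g : M →ₗ[R] N)
    (hf : Function.Injective f) (hg : Function.Surjective g) (hfg : Function.Exact f g) {s t : R}
    (hs : s ∈ stabAnn R N) (ht : t ∈ stabAnn R L) : s * t * s ∈ stabAnn R M := by
  obtain ⟨σ, ρ, -, -, hρσ⟩ := exists_splitting f g hf hg hfg hs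
  obtain ⟨ι, _, a, b, hab⟩ := exists_factor_of_mem_stabAnn hs
  obtain ⟨κ, _, c, d, hcd⟩ := exists_factor_of_mem_stabAnn ht
  refine mem_stabAnn_of_factor (P := (ι → R) × (κ → R)) ((a ∘ₗ g).prod (c ∘ₗ ρ))
    ((t • σ ∘ₗ b).coprod (s • f ∘ₗ d)) fun x => ?_
  change t • σ (b (a (g x))) + s • f (d (c (ρ x))) = _
  rw [hab, hcd, mul_smul, ← hρσ x, smul_add, mul_comm s t, add_comm, map_smul, map_smul, mul_smul,
    mul_smul, smul_comm s t]

theorem stabAnn_tensor {s t : R} (hs : s ∈ stabAnn R M) (ht : t ∈ stabAnn R N) :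
    s * t ∈ stabAnn R (M ⊗[R] N) := by
  obtain ⟨ι, _, a, b, hab⟩ := exists_factor_of_mem_stabAnn hs
  obtain ⟨κ, _, c, d, hcd⟩ := exists_factor_of_mem_stabAnn ht
  refine mem_stabAnn_of_factor (TensorProduct.map a c) (TensorProduct.map b d) fun x => ?_
  induction x with
  | zero => simp
  | tmul x y => simp only [TensorProduct.map_tmul, hab, hcd, smul_tmul_smul]
  | add x y hx hy => simp only [map_add, hx, hy, smul_add]

/-- A scalar in the stable annihilator of the cokernel of `d` is in that of the cokernel of the
transpose of `d`. -/
theorem stabAnn_transpose {ι κ : Type} [Fintype ι] [Fintype κ]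
    (d : (ι → R) →ₗ[R] (κ → R)) (π : (κ → R) →ₗ[R] M) (hπ : Function.Surjective π)
    (hd : Function.Exact d π) {s : R} (hs : s ∈ stabAnn R M) :
    s ∈ stabAnn R (((ι → R) →ₗ[R] R) ⧸ LinearMap.range (LinearMap.lcomp R R d)) := by
  obtain ⟨σ, hσ⟩ := exists_lift_of_mem_stabAnn hs π hπ
  have hmem : ∀ x, (s • LinearMap.id - σ ∘ₗ π : (κ → R) →ₗ[R] (κ → R)) x ∈ LinearMap.range d :=
    fun x => (hd _).1 (by simp [hσ])
  -- `s - σ π` lands in the image of `d`, so it lifts to `h` with `d h = s - σ π`; then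
  -- `s - (h d)*` kills the image of `d*` and provides the factorization through the dual of
  -- `ι → R`.
  obtain ⟨h, hh⟩ := Module.projective_lifting_property (LinearMap.rangeRestrict d)
    (LinearMap.codRestrict (LinearMap.range d) _ hmem) (LinearMap.surjective_rangeRestrict d)
  have hh' : ∀ x, d (h x) = s • x - σ (π x) := fun x => by
    have := congrArg Subtype.val (LinearMap.congr_fun hh x)
    simpa using this
  refine mem_stabAnn_of_factor (P := (ι → R) →ₗ[R] R)
    (Submodule.liftQ _ (s • LinearMap.id - LinearMap.lcomp R R (h ∘ₗ d)) ?_)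
    (Submodule.mkQ _) fun x => ?_
  · rintro _ ⟨z, rfl⟩
    rw [LinearMap.mem_ker]
    ext x
    simp [hh', hd.apply_apply_eq_zero]
  · obtain ⟨y, rfl⟩ := Submodule.mkQ_surjective _ x
    simp only [Submodule.mkQ_apply, Submodule.liftQ_apply, LinearMap.sub_apply,
      LinearMap.smul_apply, LinearMap.id_apply, Submodule.Quotient.mk_sub,
      Submodule.Quotient.mk_smul, sub_eq_self]
    rw [Submodule.Quotient.mk_eq_zero]
    exact ⟨y ∘ₗ h, rfl⟩

/-- The nonfree locus is the closed set defined by the stable annihilator. -/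
theorem mem_nonfreeLocus_iff [IsNoetherianRing R] [Module.Finite R M] (p : PrimeSpectrum R) :
    p ∈ nonfreeLocus R M ↔ stabAnn R M ≤ p.asIdeal := by
  change ¬ Module.Free _ _ ↔ _
  rw [← not_iff_not, not_not, SetLike.not_le_iff_exists]
  set S := p.asIdeal.primeCompl
  constructor
  · intro hfree
    let A := Localization.AtPrime p.asIdeal
    let Mp := LocalizedModule S M
    have hfinite : Module.Finite A Mp := inferInstance
    obtain ⟨n, ⟨b⟩⟩ : ∃ n : ℕ, Nonempty (Module.Basis (Fin n) A Mp) :=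
      ⟨_, ⟨Module.finBasis A Mp⟩⟩
    have : Module.FinitePresentation R M := Module.finitePresentation_of_finite R M
    let ℓ : M →ₗ[R] Mp := LocalizedModule.mkLinearMap S M
    let c : (Fin n → R) →ₗ[R] (Fin n → A) := (Algebra.linearMap R A).compLeft (Fin n)
    have : IsLocalizedModule S c := by
      have := IsLocalizedModule.pi S (fun _ : Fin n => Algebra.linearMap R A)
      exact this
    let e : Mp →ₗ[R] (Fin n → A) := b.equivFun.toLinearMap.restrictScalars R
    let einv : (Fin n → A) →ₗ[R] Mp := b.equivFun.symm.toLinearMap.restrictScalars R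
    have hee : ∀ x, einv (e x) = x := b.equivFun.symm_apply_apply
    obtain ⟨f, s, hf⟩ := Module.FinitePresentation.exists_lift_of_isLocalizedModule S c (e ∘ₗ ℓ)
    obtain ⟨g, t, hg⟩ := Module.FinitePresentation.exists_lift_of_isLocalizedModule S ℓ (einv ∘ₗ c)
    -- `f` and `g` are the two directions of an isomorphism `M_p ≃ A ^ n` after clearing
    -- denominators, so their composite is the scalar `t s` after localization.
    have key : ℓ ∘ₗ (g ∘ₗ f) = ℓ ∘ₗ ((t * s : S) • LinearMap.id) := by
      ext x
      have h1 := LinearMap.congr_fun hg (f x)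
      have h2 := LinearMap.congr_fun hf x
      simp only [LinearMap.comp_apply, LinearMap.smul_apply, LinearMap.id_apply] at h1 h2 ⊢
      rw [h1, h2]
      simp only [Submonoid.smul_def, map_smul, hee, mul_smul]
    obtain ⟨r, hr⟩ := Module.Finite.exists_smul_of_comp_eq_of_isLocalizedModule S ℓ _ _ key
    refine ⟨r * (t * s), mem_stabAnn_of_factor f ((r : R) • g) fun x => ?_, ?_⟩
    · have := LinearMap.congr_fun hr x
      simpa [Submonoid.smul_def, mul_smul] using this
    · exact (r * (t * s)).2
  · rintro ⟨s, hs, hsp⟩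
    obtain ⟨ι, _, f, g, hfg⟩ := exists_factor_of_mem_stabAnn hs
    have hu : IsUnit (algebraMap R (Localization.AtPrime p.asIdeal) s) :=
      IsLocalization.map_units _ (⟨s, hsp⟩ : S)
    obtain ⟨v, hv⟩ := hu.exists_left_inv
    have hP : Module.Projective (Localization.AtPrime p.asIdeal) (LocalizedModule S M) := by
      refine Module.Projective.of_split (LocalizedModule.map S f) (v • LocalizedModule.map S g) ?_
      ext x
      induction x using LocalizedModule.induction_on with
      | h m t =>
      simp only [LinearMap.comp_apply, LinearMap.smul_apply, LinearMap.id_apply,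
        LocalizedModule.map_mk, hfg]
      rw [← LocalizedModule.smul'_mk, ← algebraMap_smul (Localization.AtPrime p.asIdeal) s,
        smul_smul, hv, one_smul]
    have : Module.Flat (Localization.AtPrime p.asIdeal) (LocalizedModule S M) := inferInstance
    exact Module.free_of_flat_of_isLocalRing

end StabAnn

/-! ### The subcategories `V⁻¹(Φ)` -/

section Loci

variable {R : Type} [CommRing R]

/-- If `p` is killed by an element outside `p`, then the maximal ideal of `R_p` is zero. -/
theorem isField_localization_of_smul_eq_zero (p : PrimeSpectrum R) (v : R) (hv : v ∉ p.asIdeal)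
    (h : ∀ a ∈ p.asIdeal, a * v = 0) : IsField (Localization.AtPrime p.asIdeal) := by
  rw [IsLocalRing.isField_iff_maximalIdeal_eq, ← Localization.AtPrime.map_eq_maximalIdeal,
    Ideal.map_eq_bot_iff_le_ker]
  intro a ha
  rw [RingHom.mem_ker, IsLocalization.map_eq_zero_iff p.asIdeal.primeCompl]
  exact ⟨⟨v, hv⟩, by rw [mul_comm]; exact h a ha⟩

theorem catNonfreeLocus_subset_nonFieldLocus (𝒳 : Set (ModuleCat.{0} R)) :
    catNonfreeLocus R 𝒳 ⊆ nonFieldLocus R := by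
  intro p hp hfield
  simp only [catNonfreeLocus, Set.mem_iUnion] at hp
  obtain ⟨M, -, hp⟩ := hp
  let _ := hfield.toField
  exact hp (Module.Free.of_divisionRing _ _)

/-- `R ⧸ p` is not free at `p` unless `R_p` is a field. -/
theorem stabAnn_quotient_le (p : PrimeSpectrum R) (hp : p ∈ nonFieldLocus R) :
    stabAnn R (R ⧸ p.asIdeal) ≤ p.asIdeal := by
  intro s hs
  by_contra hsp
  obtain ⟨ι, _, f, g, hfg⟩ := exists_factor_of_mem_stabAnn hs
  have hkill : ∀ a ∈ p.asIdeal, ∀ x : R ⧸ p.asIdeal, a • x = 0 := by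
    intro a ha x
    obtain ⟨y, rfl⟩ := Ideal.Quotient.mk_surjective x
    exact Ideal.Quotient.eq_zero_iff_mem.2 (p.asIdeal.mul_mem_right y ha)
  set w := f 1
  -- Either `1 ↦ w` is zero modulo `p`, and then `s = g w` is zero in `R ⧸ p`, or some coordinate
  -- of `w` is an element outside `p` killed by `p`.
  by_cases hw : ∀ i, w i ∈ p.asIdeal
  · apply hsp
    have h1 : g w = 0 := by
      classical
      rw [← LinearMap.sum_single_apply (fun _ : ι => R) w, map_sum]
      refine Finset.sum_eq_zero fun i _ => ?_
      rw [← mul_one (w i), ← smul_eq_mul, Pi.single_smul, map_smul, hkill _ (hw i)]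
    rw [hfg] at h1
    have : Ideal.Quotient.mk p.asIdeal s = 0 := by
      rw [← h1, ← mul_one (Ideal.Quotient.mk p.asIdeal s)]; rfl
    exact Ideal.Quotient.eq_zero_iff_mem.1 this
  · push Not at hw
    obtain ⟨i, hi⟩ := hw
    refine hp (isField_localization_of_smul_eq_zero p (w i) hi fun a ha => ?_)
    have : a • w = 0 := by rw [← map_smul, hkill a ha, map_zero]
    exact congrFun this i

variable [IsNoetherianRing R]

theorem specClosed_catNonfreeLocus (𝒳 : Set (ModuleCat.{0} R))
    (hfg : ∀ M ∈ 𝒳, Module.Finite R M) : SpecClosed R (catNonfreeLocus R 𝒳) := by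
  intro p hp q hpq
  simp only [catNonfreeLocus, Set.mem_iUnion] at hp ⊢
  obtain ⟨M, hM, hp⟩ := hp
  have := hfg M hM
  exact ⟨M, hM, (mem_nonfreeLocus_iff q).2 (((mem_nonfreeLocus_iff p).1 hp).trans hpq)⟩

/-- Membership in `V⁻¹(Φ)` in terms of stable annihilators. -/
theorem mem_Vinv_iff (Φ : Set (PrimeSpectrum R)) (M : ModuleCat.{0} R) :
    M ∈ Vinv R Φ ↔ Module.Finite R M ∧ ∀ p ∉ Φ, ∃ s ∈ stabAnn R M, s ∉ p.asIdeal := by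
  refine and_congr_right fun hfin => ?_
  have := hfin
  simp only [Set.subset_def, mem_nonfreeLocus_iff]
  refine forall_congr' fun p => ?_
  rw [← not_imp_not, SetLike.not_le_iff_exists]

theorem isResolving_Vinv (Φ : Set (PrimeSpectrum R)) : IsResolving R (Vinv R Φ) where
  fg M hM := hM.1
  mem_of_iso M N := by
    rintro ⟨e⟩ hM
    rw [mem_Vinv_iff] at hM ⊢
    obtain ⟨hfin, hM⟩ := hM
    refine ⟨Module.Finite.equiv e, fun p hp => ?_⟩
    obtain ⟨s, hs, hsp⟩ := hM p hp
    refine ⟨s, ?_, hsp⟩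
    simpa using mem_stabAnn_of_comp (r := 1) e.symm.toLinearMap e.toLinearMap (by simp) hs
  ring_mem := by
    rw [mem_Vinv_iff]
    refine ⟨inferInstanceAs (Module.Finite R R), fun p _ => ⟨1, ?_, p.2.one_notMem⟩⟩
    exact stabAnn_of_projective (P := R) 1
  summand_mem M N := by
    rintro ⟨i, q, hqi⟩ hM
    rw [mem_Vinv_iff] at hM ⊢
    obtain ⟨hfin, hM⟩ := hM
    have hqi' : ∀ x, q (i x) = x := LinearMap.congr_fun hqi
    refine ⟨Module.Finite.of_surjective q fun x => ⟨_, hqi' x⟩, fun p hp => ?_⟩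
    obtain ⟨s, hs, hsp⟩ := hM p hp
    refine ⟨s, ?_, hsp⟩
    simpa using mem_stabAnn_of_comp (r := 1) i q (by simpa using hqi') hs
  extension_mem L M N f g hf hg hfg hL hN := by
    rw [mem_Vinv_iff] at hL hN ⊢
    obtain ⟨hLfin, hL⟩ := hL
    obtain ⟨hNfin, hN⟩ := hN
    refine ⟨?_, fun p hp => ?_⟩
    · have : IsNoetherian R M := isNoetherian_of_range_eq_ker f g hfg.linearMap_ker_eq.symm
      infer_instance
    · obtain ⟨s, hs, hsp⟩ := hL p hp
      obtain ⟨t, ht, htp⟩ := hN p hp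
      exact ⟨_, stabAnn_ext f g hf hg hfg ht hs,
        p.asIdeal.primeCompl.mul_mem (p.asIdeal.primeCompl.mul_mem htp hsp) htp⟩
  ker_epi_mem L M N f g hf hg hfg hM hN := by
    rw [mem_Vinv_iff] at hM hN ⊢
    obtain ⟨hMfin, hM⟩ := hM
    obtain ⟨hNfin, hN⟩ := hN
    refine ⟨Module.Finite.of_injective f hf, fun p hp => ?_⟩
    obtain ⟨s, hs, hsp⟩ := hM p hp
    obtain ⟨t, ht, htp⟩ := hN p hp
    exact ⟨_, stabAnn_ker f g hf hg hfg ht hs, p.asIdeal.primeCompl.mul_mem hsp htp⟩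

theorem closedUnderTensor_Vinv (Φ : Set (PrimeSpectrum R)) : ClosedUnderTensor R (Vinv R Φ) := by
  intro X hX Y hY
  rw [mem_Vinv_iff] at hX hY ⊢
  obtain ⟨hXfin, hX⟩ := hX
  obtain ⟨hYfin, hY⟩ := hY
  refine ⟨inferInstanceAs (Module.Finite R (X ⊗[R] Y)), fun p hp => ?_⟩
  obtain ⟨s, hs, hsp⟩ := hX p hp
  obtain ⟨t, ht, htp⟩ := hY p hp
  exact ⟨_, stabAnn_tensor hs ht, p.asIdeal.primeCompl.mul_mem hsp htp⟩

theorem closedUnderTranspose_Vinv [IsLocalRing R] (Φ : Set (PrimeSpectrum R)) :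
    ClosedUnderTranspose R (Vinv R Φ) := by
  rintro M hM T ⟨n, m, d, π, hπ, hd, -, -, ⟨e⟩⟩
  rw [mem_Vinv_iff] at hM ⊢
  obtain ⟨-, hM⟩ := hM
  refine ⟨Module.Finite.equiv e.symm, fun p hp => ?_⟩
  obtain ⟨s, hs, hsp⟩ := hM p hp
  refine ⟨s, ?_, hsp⟩
  simpa using mem_stabAnn_of_comp (r := 1) e.toLinearMap e.symm.toLinearMap (by simp)
    (stabAnn_transpose d π hπ hd hs)

theorem catNonfreeLocus_Vinv (Φ : Set (PrimeSpectrum R)) (hΦ : SpecClosed R Φ)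
    (hs : Φ ⊆ nonFieldLocus R) : catNonfreeLocus R (Vinv R Φ) = Φ := by
  apply subset_antisymm
  · exact Set.iUnion₂_subset fun M hM => hM.2
  · intro p hp
    have hfin : Module.Finite R (R ⧸ p.asIdeal) := inferInstance
    refine Set.mem_iUnion₂.2 ⟨ModuleCat.of R (R ⧸ p.asIdeal), ?_,
      (mem_nonfreeLocus_iff (M := R ⧸ p.asIdeal) p).2 (stabAnn_quotient_le p (hs hp))⟩
    refine ⟨hfin, fun q hq => hΦ p hp q fun a ha => ?_⟩
    refine (mem_nonfreeLocus_iff (M := R ⧸ p.asIdeal) q).1 hq (mem_stabAnn_of_annihilator ?_)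
    rwa [Ideal.annihilator_quotient]

end Loci

/-! ### Closure properties of resolving subcategories -/

section Resolving

variable {R : Type} [CommRing R] {𝒳 : Set (ModuleCat.{0} R)}
variable {L M N : Type} [AddCommGroup L] [Module R L] [AddCommGroup M] [Module R M]
  [AddCommGroup N] [Module R N]

namespace IsResolving

theorem ext (h : IsResolving R 𝒳) (f : L →ₗ[R] M) (g : M →ₗ[R] N)
    (hf : Function.Injective f) (hg : Function.Surjective g) (hfg : Function.Exact f g)
    (hL : ModuleCat.of R L ∈ 𝒳) (hN : ModuleCat.of R N ∈ 𝒳) : ModuleCat.of R M ∈ 𝒳 :=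
  h.extension_mem (.of R L) (.of R M) (.of R N) f g hf hg hfg hL hN

theorem retract (h : IsResolving R 𝒳) (i : N →ₗ[R] M) (q : M →ₗ[R] N) (hqi : ∀ x, q (i x) = x)
    (hM : ModuleCat.of R M ∈ 𝒳) : ModuleCat.of R N ∈ 𝒳 :=
  h.summand_mem (.of R M) (.of R N) ⟨i, q, LinearMap.ext hqi⟩ hM

theorem equiv (h : IsResolving R 𝒳) (e : M ≃ₗ[R] N) (hM : ModuleCat.of R M ∈ 𝒳) :
    ModuleCat.of R N ∈ 𝒳 :=
  h.mem_of_iso (.of R M) (.of R N) ⟨e⟩ hM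

theorem ker (h : IsResolving R 𝒳) (g : M →ₗ[R] N) (hg : Function.Surjective g)
    (hM : ModuleCat.of R M ∈ 𝒳) (hN : ModuleCat.of R N ∈ 𝒳) :
    ModuleCat.of R (LinearMap.ker g) ∈ 𝒳 :=
  h.ker_epi_mem (.of R (LinearMap.ker g)) (.of R M) (.of R N) (LinearMap.ker g).subtype g
    Subtype.val_injective hg (LinearMap.exact_subtype_ker_map g) hM hN

theorem finite (h : IsResolving R 𝒳) (hM : ModuleCat.of R M ∈ 𝒳) : Module.Finite R M :=
  h.fg _ hM

theorem zero (h : IsResolving R 𝒳) [Subsingleton M] : ModuleCat.of R M ∈ 𝒳 :=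
  h.retract (0 : M →ₗ[R] R) 0 (fun _ => Subsingleton.elim _ _) h.ring_mem

theorem prod (h : IsResolving R 𝒳) (hM : ModuleCat.of R M ∈ 𝒳) (hN : ModuleCat.of R N ∈ 𝒳) :
    ModuleCat.of R (M × N) ∈ 𝒳 :=
  h.ext (LinearMap.inl R M N) (LinearMap.snd R M N) LinearMap.inl_injective
    LinearMap.snd_surjective .inl_snd hM hN

theorem pi (h : IsResolving R 𝒳) (ι : Type) [Finite ι] (hM : ModuleCat.of R M ∈ 𝒳) :
    ModuleCat.of R (ι → M) ∈ 𝒳 := by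
  obtain ⟨n, ⟨e⟩⟩ := Finite.exists_equiv_fin ι
  suffices H : ∀ n : ℕ, ModuleCat.of R (Fin n → M) ∈ 𝒳 from
    h.equiv (LinearEquiv.funCongrLeft R M e) (H n)
  intro n
  induction n with
  | zero => exact h.zero
  | succ n ih => exact h.equiv (Fin.consLinearEquiv R fun _ : Fin (n + 1) => M) (h.prod hM ih)

theorem free (h : IsResolving R 𝒳) (ι : Type) [Finite ι] : ModuleCat.of R (ι → R) ∈ 𝒳 :=
  h.pi ι h.ring_mem

theorem projective (h : IsResolving R 𝒳) [Module.Finite R M] [Module.Projective R M] :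
    ModuleCat.of R M ∈ 𝒳 := by
  obtain ⟨n, f, hf⟩ := Module.Finite.exists_fin' R M
  obtain ⟨g, hg⟩ := Module.projective_lifting_property f LinearMap.id hf
  exact h.retract g f (LinearMap.congr_fun hg) (h.free (Fin n))

/-- A resolving subcategory contains a submodule `U` of `M` when it contains `M` and `M ⧸ U`. -/
theorem submodule (h : IsResolving R 𝒳) (U : Submodule R M) (hM : ModuleCat.of R M ∈ 𝒳)
    (hU : ModuleCat.of R (M ⧸ U) ∈ 𝒳) : ModuleCat.of R U ∈ 𝒳 := by
  have := h.ker U.mkQ U.mkQ_surjective hM hU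
  exact h.equiv (LinearEquiv.ofEq _ _ U.ker_mkQ) this

theorem ker_of_range (h : IsResolving R 𝒳) (f : L →ₗ[R] M) (hL : ModuleCat.of R L ∈ 𝒳)
    (hU : ModuleCat.of R (LinearMap.range f) ∈ 𝒳) : ModuleCat.of R (LinearMap.ker f) ∈ 𝒳 := by
  have := h.ker f.rangeRestrict f.surjective_rangeRestrict hL hU
  rwa [LinearMap.ker_rangeRestrict] at this

/-- A module lies in a resolving subcategory as soon as `R ⧸ q` does for all primes `q` of its
support. -/
theorem of_support (h : IsResolving R 𝒳) [IsNoetherianRing R] [hfin : Module.Finite R M]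
    (H : ∀ q : PrimeSpectrum R, Module.annihilator R M ≤ q.asIdeal →
      ModuleCat.of R (R ⧸ q.asIdeal) ∈ 𝒳) : ModuleCat.of R M ∈ 𝒳 := by
  revert H
  induction hfin using IsNoetherianRing.induction_on_isQuotientEquivQuotientPrime R with
  | subsingleton N => exact fun _ => h.zero
  | quotient N q e =>
    intro H
    refine h.equiv e.symm (H q ?_)
    rw [e.annihilator_eq]
    exact (Ideal.annihilator_quotient (I := q.1)).le
  | exact N₁ N₂ N₃ f g hf hg hfg h₁ h₃ =>
    intro H
    exact h.ext f g hf hg hfg (h₁ fun q hq => H q ((f.annihilator_le_of_injective hf).trans hq))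
      (h₃ fun q hq => H q ((g.annihilator_le_of_surjective hg).trans hq))

end IsResolving
end Resolving

/-! ### Pushouts of free covers -/

section Pushout

variable {R : Type} [CommRing R]
variable {K P V C W : Type} [AddCommGroup K] [Module R K] [AddCommGroup P] [Module R P]
  [AddCommGroup V] [Module R V] [AddCommGroup C] [Module R C] [AddCommGroup W] [Module R W]

/-- The pushout of `j : K → P` along `φ : K → V`. When `0 → K → P → C → 0` is exact, it is an
extension of `C` by `V`. -/
abbrev Push (j : K →ₗ[R] P) (φ : K →ₗ[R] V) : Type :=
  (V × P) ⧸ LinearMap.range (φ.prod (-j))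

namespace Push

variable (j : K →ₗ[R] P) (φ : K →ₗ[R] V) (π : P →ₗ[R] C)

/-- The structure map `V → Push j φ`. -/
def inV : V →ₗ[R] Push j φ := Submodule.mkQ _ ∘ₗ LinearMap.inl R V P

/-- The structure map `P → Push j φ`. -/
def inP : P →ₗ[R] Push j φ := Submodule.mkQ _ ∘ₗ LinearMap.inr R V P

theorem inV_add_inP (v : V) (b : P) :
    inV j φ v + inP j φ b = Submodule.Quotient.mk (v, b) := by
  simp only [inV, inP, LinearMap.comp_apply, Submodule.mkQ_apply, ← Submodule.Quotient.mk_add]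
  simp

theorem inV_add_inP_eq_zero {v : V} {b : P} :
    inV j φ v + inP j φ b = 0 ↔ ∃ w, v = φ w ∧ b = -j w := by
  rw [inV_add_inP, Submodule.Quotient.mk_eq_zero, LinearMap.mem_range]
  simp [Prod.ext_iff, eq_comm]

theorem glue (w : K) : inV j φ (φ w) = inP j φ (j w) := by
  have := (inV_add_inP_eq_zero j φ (v := φ w) (b := -j w)).2 ⟨w, rfl, rfl⟩
  rwa [map_neg, add_neg_eq_zero] at this

theorem exists_rep (x : Push j φ) : ∃ v b, x = inV j φ v + inP j φ b := by
  obtain ⟨⟨v, b⟩, rfl⟩ := Submodule.Quotient.mk_surjective _ x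
  exact ⟨v, b, (inV_add_inP ..).symm⟩

variable {j φ} in
/-- The universal property of the pushout. -/
def lift (a : V →ₗ[R] W) (b : P →ₗ[R] W) (h : ∀ w, a (φ w) = b (j w)) : Push j φ →ₗ[R] W :=
  Submodule.liftQ _ (a.coprod b) <| by
    rintro _ ⟨w, rfl⟩
    simp [h]

@[simp] theorem lift_inV (a : V →ₗ[R] W) (b : P →ₗ[R] W) (h : ∀ w, a (φ w) = b (j w)) (v : V) :
    lift a b h (inV j φ v) = a v := by
  simp [lift, inV]

@[simp] theorem lift_inP (a : V →ₗ[R] W) (b : P →ₗ[R] W) (h : ∀ w, a (φ w) = b (j w)) (v : P) :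
    lift a b h (inP j φ v) = b v := by
  simp [lift, inP]

variable {j φ π}

theorem inV_injective (hj : Function.Injective j) : Function.Injective (inV j φ) := by
  rw [injective_iff_map_eq_zero]
  intro v hv
  have : inV j φ v + inP j φ 0 = 0 := by simpa using hv
  obtain ⟨w, rfl, hw⟩ := (inV_add_inP_eq_zero j φ).1 this
  have : w = 0 := hj (by simpa using hw.symm)
  simp [this]

variable (φ) in
/-- The projection `Push j φ → C`. -/
def proj (hjπ : Function.Exact j π) : Push j φ →ₗ[R] C :=
  lift 0 π fun w => by simp [hjπ.apply_apply_eq_zero]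

@[simp] theorem proj_inV (hjπ : Function.Exact j π) (v : V) : proj φ hjπ (inV j φ v) = 0 := by
  simp [proj]

@[simp] theorem proj_inP (hjπ : Function.Exact j π) (b : P) : proj φ hjπ (inP j φ b) = π b := by
  simp [proj]

theorem proj_surjective (hjπ : Function.Exact j π) (hπ : Function.Surjective π) :
    Function.Surjective (proj φ hjπ) := fun c => by
  obtain ⟨b, rfl⟩ := hπ c
  exact ⟨inP j φ b, by simp⟩

theorem exact_proj (hjπ : Function.Exact j π) : Function.Exact (inV j φ) (proj φ hjπ) := by
  intro x
  constructor
  · intro hx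
    obtain ⟨v, b, rfl⟩ := exists_rep j φ x
    simp only [map_add, proj_inV, proj_inP, zero_add] at hx
    obtain ⟨w, rfl⟩ := (hjπ b).1 hx
    exact ⟨v + φ w, by rw [map_add, glue]⟩
  · rintro ⟨v, rfl⟩
    simp

theorem mem {𝒳 : Set (ModuleCat.{0} R)} (h : IsResolving R 𝒳) (φ : K →ₗ[R] V)
    (hj : Function.Injective j) (hjπ : Function.Exact j π) (hπ : Function.Surjective π)
    (hV : ModuleCat.of R V ∈ 𝒳) (hC : ModuleCat.of R C ∈ 𝒳) :
    ModuleCat.of R (Push j φ) ∈ 𝒳 :=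
  h.ext (inV j φ) (proj φ hjπ) (inV_injective hj) (proj_surjective hjπ hπ) (exact_proj hjπ) hV hC

/-- When `φ` is multiplication by `t` and `P` is free, multiplication by `t` on the pushout factors
through `P`. -/
theorem mem_stabAnn_self [Module.Finite R P] [Module.Projective R P] (t : R) :
    t ∈ stabAnn R (Push j (t • (LinearMap.id : K →ₗ[R] K))) := by
  refine mem_stabAnn_of_factor (P := P) (lift j (t • LinearMap.id) fun w => by simp) (inP j _)
    fun x => ?_
  obtain ⟨v, b, rfl⟩ := exists_rep _ _ x
  simp [← glue]

theorem mem_stabAnn_pow [Module.Finite R P] [Module.Projective R P]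
    (hj : Function.Injective j) (hjπ : Function.Exact j π) (hπ : Function.Surjective π)
    (φ : K →ₗ[R] K) {s : R} (hs : s ∈ stabAnn R C) : s ^ 3 ∈ stabAnn R (Push j φ) := by
  have h1 := stabAnn_ker j π hj hπ hjπ hs (stabAnn_of_projective (P := P) 1)
  have h2 := stabAnn_ext (inV j φ) (proj φ hjπ) (inV_injective hj) (proj_surjective hjπ hπ)
    (exact_proj hjπ) hs h1
  convert h2 using 1
  ring

/-- If `t` is in the stable annihilator of `C`, then `C` is a direct summand of the pushout along
multiplication by `t`. -/
theorem exists_section [Module.Projective R P]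
    (hj : Function.Injective j) (hjπ : Function.Exact j π) (hπ : Function.Surjective π)
    {t : R} (ht : t ∈ stabAnn R C) :
    ∃ σ : C →ₗ[R] Push j (t • (LinearMap.id : K →ₗ[R] K)), ∀ c, proj _ hjπ (σ c) = c := by
  obtain ⟨σ, ρ, -, hρ, h3⟩ := exists_splitting j π hj hπ hjπ ht
  have hle : LinearMap.range j ≤
      LinearMap.ker (inP j (t • (LinearMap.id : K →ₗ[R] K)) - inV j _ ∘ₗ ρ) := by
    rintro _ ⟨w, rfl⟩
    simp only [LinearMap.mem_ker, LinearMap.sub_apply, LinearMap.comp_apply, hρ]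
    rw [← glue]; simp
  let e := hjπ.linearEquivOfSurjective hπ
  refine ⟨Submodule.liftQ _ _ hle ∘ₗ e.symm.toLinearMap, fun c => ?_⟩
  obtain ⟨b, rfl⟩ := hπ c
  have he : e.symm (π b) = Submodule.Quotient.mk b := by
    rw [LinearEquiv.symm_apply_eq]; rfl
  simp [he]

end Push
end Pushout

/-! ### Modules built from torsion modules by syzygies and extensions -/

section Tower

variable {R : Type} [CommRing R]

/-- Every element of `S` acts nilpotently on the submodule `U` of `N`. -/
def TorsOn {N : Type} [AddCommGroup N] [Module R N] (S : Set R) (U : Submodule R N) : Prop :=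
  ∀ t ∈ S, ∃ k : ℕ, ∀ x ∈ U, t ^ k • x = 0

/-- `Tower S n C` means that `C` is obtained in `n` steps from an `S`-torsion module, where in each
step a module `C'` is replaced by an extension of a first syzygy of `C'` by an `S`-torsion
module. -/
def Tower (S : Set R) : ℕ → ModuleCat.{0} R → Prop
  | 0, C => TorsOn S (⊤ : Submodule R C)
  | n + 1, C => ∃ (G C' : ModuleCat.{0} R) (d : C →ₗ[R] G) (q : G →ₗ[R] C'),
      Module.Finite R G ∧ Module.Projective R G ∧ Function.Surjective q ∧ Function.Exact d q ∧
      TorsOn S (LinearMap.ker d) ∧ Tower S n C'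

variable {C D K P : Type} [AddCommGroup C] [Module R C] [AddCommGroup D] [Module R D]
  [AddCommGroup K] [Module R K] [AddCommGroup P] [Module R P]

theorem TorsOn.comp {S : Set R} {N : Type} [AddCommGroup N] [Module R N] {q : D →ₗ[R] C}
    {d : C →ₗ[R] N} (hq : TorsOn S (LinearMap.ker q)) (hd : TorsOn S (LinearMap.ker d)) :
    TorsOn S (LinearMap.ker (d ∘ₗ q)) := by
  intro t ht
  obtain ⟨k, hk⟩ := hq t ht
  obtain ⟨l, hl⟩ := hd t ht
  refine ⟨k + l, fun x hx => ?_⟩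
  rw [pow_add, mul_smul]
  refine hk _ ?_
  rw [LinearMap.mem_ker, map_smul]
  exact hl _ hx

/-- Towers may be enlarged by an `S`-torsion kernel, as each step absorbs one. -/
theorem Tower.of_surjective {S : Set R} {n : ℕ} (h : Tower S n (.of R C)) (q : D →ₗ[R] C)
    (hq : Function.Surjective q) (hker : TorsOn S (LinearMap.ker q)) : Tower S n (.of R D) := by
  cases n with
  | zero =>
    have h0 : TorsOn S (LinearMap.ker (0 : C →ₗ[R] PUnit.{1})) := by
      rw [LinearMap.ker_zero]; exact h
    have := hker.comp h0
    rwa [LinearMap.zero_comp, LinearMap.ker_zero] at this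
  | succ n =>
    obtain ⟨G, C', d, q', h1, h2, h3, h4, h5, h6⟩ := h
    refine ⟨G, C', d ∘ₗ q, q', h1, h2, h3, ?_, hker.comp h5, h6⟩
    intro y
    rw [h4 y]
    constructor
    · rintro ⟨c, rfl⟩
      obtain ⟨x, rfl⟩ := hq c
      exact ⟨x, rfl⟩
    · rintro ⟨x, rfl⟩
      exact ⟨q x, rfl⟩

/-- The pushout of a free cover of `C` along multiplication by a power of `t` adjoins `t` to the
elements acting nilpotently, at the price of one more step. -/
theorem Tower.push {S : Set R} (t : R) (k : ℕ) (n : ℕ) :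
    ∀ {C K P : Type} [AddCommGroup C] [Module R C] [AddCommGroup K] [Module R K] [AddCommGroup P]
      [Module R P] [Module.Finite R P] [Module.Projective R P] (j : K →ₗ[R] P) (π : P →ₗ[R] C),
      Function.Injective j → Function.Exact j π → Function.Surjective π → Tower S n (.of R C) →
      Tower (insert t S) (n + 1) (.of R (Push j (t ^ k • (LinearMap.id : K →ₗ[R] K)))) := by
  induction n with
  | zero =>
    intro C K P _ _ _ _ _ _ _ _ j π hj hjπ hπ h
    -- The step is `Push → P → C ⧸ t ^ k C → 0`, with kernel isomorphic to the `t ^ k`-torsion of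
    -- `C`.
    refine ⟨.of R P, .of R (C ⧸ LinearMap.range (t ^ k • (LinearMap.id : C →ₗ[R] C))),
      Push.lift j (t ^ k • LinearMap.id) fun w => by simp, Submodule.mkQ _ ∘ₗ π, ‹_›, ‹_›,
      (Submodule.mkQ_surjective _).comp hπ, ?_, ?_, ?_⟩
    · intro b
      change Submodule.Quotient.mk (π b) = 0 ↔ _
      rw [Submodule.Quotient.mk_eq_zero]
      constructor
      · rintro ⟨c, hc⟩
        obtain ⟨b', rfl⟩ := hπ c
        obtain ⟨w, hw⟩ := (hjπ (b - t ^ k • b')).1 (by simpa [sub_eq_zero] using hc.symm)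
        exact ⟨Push.inV _ _ w + Push.inP _ _ b', by simp [hw]⟩
      · rintro ⟨x, rfl⟩
        obtain ⟨v, b, rfl⟩ := Push.exists_rep _ _ x
        exact ⟨π b, by simp [hjπ.apply_apply_eq_zero]⟩
    · have key : ∀ s : R, (∀ c : C, t ^ k • c = 0 → s • c = 0) →
          ∀ x ∈ LinearMap.ker (Push.lift j (t ^ k • LinearMap.id) (fun w => by simp) :
            Push j (t ^ k • (LinearMap.id : K →ₗ[R] K)) →ₗ[R] P), s • x = 0 := by
        intro s hs x hx
        obtain ⟨v, b, rfl⟩ := Push.exists_rep _ _ x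
        simp only [LinearMap.mem_ker, map_add, Push.lift_inV, Push.lift_inP, LinearMap.smul_apply,
          LinearMap.id_apply] at hx
        have h1 : t ^ k • π b = 0 := by
          simpa [hjπ.apply_apply_eq_zero] using congrArg π hx
        obtain ⟨w, hw⟩ := (hjπ (s • b)).1 (by rw [map_smul, hs _ h1])
        rw [smul_add, ← map_smul, ← map_smul, Push.inV_add_inP_eq_zero]
        refine ⟨-w, hj ?_, by simp [hw]⟩
        rw [map_smul, eq_neg_of_add_eq_zero_left hx]
        simp [hw, smul_comm s]
      rintro s (rfl | hs)
      · exact ⟨k, key _ fun c hc => hc⟩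
      · obtain ⟨l, hl⟩ := h s hs
        exact ⟨l, key _ fun c _ => hl c trivial⟩
    · rintro s (rfl | hs)
      · refine ⟨k, fun x _ => ?_⟩
        obtain ⟨c, rfl⟩ := Submodule.Quotient.mk_surjective _ x
        rw [← Submodule.Quotient.mk_smul, Submodule.Quotient.mk_eq_zero]
        exact ⟨c, rfl⟩
      · obtain ⟨l, hl⟩ := h s hs
        refine ⟨l, fun x _ => ?_⟩
        obtain ⟨c, rfl⟩ := Submodule.Quotient.mk_surjective _ x
        rw [← Submodule.Quotient.mk_smul, hl c trivial, Submodule.Quotient.mk_zero]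
  | succ n ih =>
    intro C K P _ _ _ _ _ _ _ _ j π hj hjπ hπ h
    obtain ⟨G, C', d, q, hG1, hG2, hq, hdq, htors, hC'⟩ := h
    change (C →ₗ[R] G) at d
    have hdq : Function.Exact d q := hdq
    -- The step is `Push → P × G → D → 0`, where `D` is the pushout of `d` along `t ^ k`; the
    -- kernel is the `t ^ k`-torsion of the kernel of `d`.
    refine ⟨.of R (P × G), .of R (Push d (t ^ k • (LinearMap.id : C →ₗ[R] C))),
      Push.lift (j.prod 0) ((t ^ k • LinearMap.id).prod (-(d ∘ₗ π)))
        fun w => by simp [hjπ.apply_apply_eq_zero],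
      (Push.inV d _ ∘ₗ π).coprod (Push.inP d _), inferInstanceAs (Module.Finite R (P × G)),
      inferInstanceAs (Module.Projective R (P × G)), ?_, ?_, ?_, ?_⟩
    · intro x
      obtain ⟨c, g, rfl⟩ := Push.exists_rep _ _ x
      obtain ⟨b, rfl⟩ := hπ c
      exact ⟨(b, g), rfl⟩
    · rintro ⟨b, g⟩
      simp only [LinearMap.coprod_apply, LinearMap.comp_apply]
      rw [Push.inV_add_inP_eq_zero]
      constructor
      · rintro ⟨c, hc, rfl⟩
        obtain ⟨b', rfl⟩ := hπ c
        obtain ⟨w, hw⟩ := (hjπ (b - t ^ k • b')).1 (by simpa [sub_eq_zero] using hc)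
        exact ⟨Push.inV _ _ w + Push.inP _ _ b', by simp [hw]⟩
      · rintro ⟨x, hx⟩
        obtain ⟨v, b', rfl⟩ := Push.exists_rep _ _ x
        have h1 := congrArg Prod.fst hx
        have h2 := congrArg Prod.snd hx
        simp only [map_add, Push.lift_inV, Push.lift_inP] at h1 h2
        exact ⟨π b', by simp [← h1, hjπ.apply_apply_eq_zero], by simp [← h2]⟩
    · have key : ∀ s : R, (∀ c : C, d c = 0 → t ^ k • c = 0 → s • c = 0) →
          ∀ x ∈ LinearMap.ker (Push.lift (j.prod 0) ((t ^ k • LinearMap.id).prod (-(d ∘ₗ π)))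
            (fun w => by simp [hjπ.apply_apply_eq_zero]) :
            Push j (t ^ k • (LinearMap.id : K →ₗ[R] K)) →ₗ[R] P × G), s • x = 0 := by
        intro s hs x hx
        obtain ⟨v, b, rfl⟩ := Push.exists_rep _ _ x
        rw [LinearMap.mem_ker, map_add, Push.lift_inV, Push.lift_inP] at hx
        have hx2 : d (π b) = 0 := by simpa using congrArg Prod.snd hx
        replace hx : j v + t ^ k • b = 0 := by simpa using congrArg Prod.fst hx
        have h1 : t ^ k • π b = 0 := by
          simpa [hjπ.apply_apply_eq_zero] using congrArg π hx
        obtain ⟨w, hw⟩ := (hjπ (s • b)).1 (by rw [map_smul, hs _ hx2 h1])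
        rw [smul_add, ← map_smul, ← map_smul, Push.inV_add_inP_eq_zero]
        refine ⟨-w, hj ?_, by simp [hw]⟩
        rw [map_smul, eq_neg_of_add_eq_zero_left hx]
        simp [hw, smul_comm s]
      rintro s (rfl | hs)
      · exact ⟨k, key _ fun c _ hc => hc⟩
      · obtain ⟨l, hl⟩ := htors s hs
        exact ⟨l, key _ fun c hc _ => hl c hc⟩
    -- `D` maps onto the pushout of the image of `d` along `t ^ k`, with `S`-torsion and
    -- `t`-torsion kernel, and the latter pushout is covered by the induction hypothesis.
    · have hex : Function.Exact (LinearMap.range d).subtype q := by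
        intro y
        rw [hdq y]
        simp
      have := ih (LinearMap.range d).subtype q Subtype.val_injective hex hq hC'
      refine Tower.of_surjective this (Push.lift (Push.inV _ _ ∘ₗ d.rangeRestrict) (Push.inP _ _)
        fun c => ?_) ?_ ?_
      · have := Push.glue (LinearMap.range d).subtype
          (t ^ k • (LinearMap.id : LinearMap.range d →ₗ[R] _)) (d.rangeRestrict c)
        simpa using this
      · intro x
        obtain ⟨⟨_, ⟨c, rfl⟩⟩, g, rfl⟩ := Push.exists_rep _ _ x
        exact ⟨Push.inV _ _ c + Push.inP _ _ g, by rw [map_add, Push.lift_inV, Push.lift_inP]; rfl⟩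
      · have key : ∀ x : Push d (t ^ k • (LinearMap.id : C →ₗ[R] C)),
            (Push.lift (Push.inV _ _ ∘ₗ d.rangeRestrict) (Push.inP _ _)
              (fun c => by
                have := Push.glue (LinearMap.range d).subtype
                  (t ^ k • (LinearMap.id : LinearMap.range d →ₗ[R] _)) (d.rangeRestrict c)
                simpa using this) : _ →ₗ[R] Push (LinearMap.range d).subtype
                  (t ^ k • (LinearMap.id : LinearMap.range d →ₗ[R] _))) x = 0 →
              ∃ c, d c = 0 ∧ x = Push.inV _ _ c := by
          intro x hx
          obtain ⟨c, g, rfl⟩ := Push.exists_rep _ _ x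
          rw [map_add, Push.lift_inV, Push.lift_inP, LinearMap.comp_apply,
            Push.inV_add_inP_eq_zero] at hx
          obtain ⟨⟨_, ⟨c0, rfl⟩⟩, h1, rfl⟩ := hx
          refine ⟨c - t ^ k • c0, ?_, ?_⟩
          · have := congrArg Subtype.val h1
            simpa [sub_eq_zero] using this
          · have := Push.glue d (t ^ k • (LinearMap.id : C →ₗ[R] C)) c0
            simp only [LinearMap.smul_apply, LinearMap.id_apply] at this
            rw [map_sub, this]
            simp [sub_eq_add_neg]
        rintro s (rfl | hs)
        · refine ⟨k, fun x hx => ?_⟩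
          obtain ⟨c, hc, rfl⟩ := key x hx
          have := Push.glue d (s ^ k • (LinearMap.id : C →ₗ[R] C)) c
          rw [hc, map_zero] at this
          rw [← map_smul]
          exact this
        · obtain ⟨l, hl⟩ := htors s hs
          refine ⟨l, fun x hx => ?_⟩
          obtain ⟨c, hc, rfl⟩ := key x hx
          rw [← map_smul, hl c hc, map_zero]

variable [IsNoetherianRing R] {𝒳 : Set (ModuleCat.{0} R)}

/-- `S`-torsion modules are supported on the primes containing `S`. -/
theorem TorsOn.mem (h : IsResolving R 𝒳) {S : Set R}
    (hS : ∀ q : PrimeSpectrum R, S ⊆ q.asIdeal → ModuleCat.of R (R ⧸ q.asIdeal) ∈ 𝒳)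
    [Module.Finite R C] {U : Submodule R C} (hU : TorsOn S U) : ModuleCat.of R U ∈ 𝒳 := by
  refine h.of_support fun q hq => hS q fun t ht => ?_
  obtain ⟨k, hk⟩ := hU t ht
  refine q.2.mem_of_pow_mem k (hq (Module.mem_annihilator.2 fun x => Subtype.ext (hk x x.2)))

/-- Each step of a tower is an extension of a syzygy by a torsion module, so it stays inside `𝒳`.
-/
theorem Tower.mem (h : IsResolving R 𝒳) {S : Set R}
    (hS : ∀ q : PrimeSpectrum R, S ⊆ q.asIdeal → ModuleCat.of R (R ⧸ q.asIdeal) ∈ 𝒳) (n : ℕ) :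
    ∀ {C : Type} [AddCommGroup C] [Module R C] [Module.Finite R C], Tower S n (.of R C) →
      ModuleCat.of R C ∈ 𝒳 := by
  induction n with
  | zero => exact fun hC => h.equiv Submodule.topEquiv (TorsOn.mem h hS hC)
  | succ n ih =>
    intro C _ _ _ hC
    obtain ⟨G, C', d, q, hG1, hG2, hq, hdq, htors, hC'⟩ := hC
    have : Module.Finite R C' := Module.Finite.of_surjective q hq
    have hG : ModuleCat.of R G ∈ 𝒳 := h.projective
    have h1 := h.ker q hq hG (ih hC')
    rw [hdq.linearMap_ker_eq] at h1
    exact h.ext (LinearMap.ker d).subtype d.rangeRestrict Subtype.val_injective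
      d.surjective_rangeRestrict
      (fun x => by rw [← LinearMap.mem_ker, LinearMap.ker_rangeRestrict]; simp)
      (TorsOn.mem h hS htors) h1

/-- A resolving subcategory containing `R ⧸ q` for all primes `q` of the nonfree locus of `M`
contains `M`. -/
theorem IsResolving.mem_of_nonfreeLocus (h : IsResolving R 𝒳) {M : Type} [AddCommGroup M]
    [Module R M] [Module.Finite R M]
    (hM : ∀ q : PrimeSpectrum R, stabAnn R M ≤ q.asIdeal → ModuleCat.of R (R ⧸ q.asIdeal) ∈ 𝒳) :
    ModuleCat.of R M ∈ 𝒳 := by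
  obtain ⟨S, hS⟩ := (isNoetherianRing_iff_ideal_fg R).1 ‹_› (stabAnn R M)
  -- `M` is a direct summand of a tower in which any given finite set of elements of `stabAnn R M`
  -- acts nilpotently. Generators of `stabAnn R M` are adjoined one at a time by pushing out along
  -- a power.
  suffices H : ∀ T : Finset R, (∀ t ∈ T, t ∈ stabAnn R M) →
      ∃ (C : ModuleCat.{0} R) (n : ℕ) (i : M →ₗ[R] C) (r : C →ₗ[R] M), Module.Finite R C ∧
        (∀ x, r (i x) = x) ∧ (∀ s ∈ stabAnn R M, ∃ k, s ^ k ∈ stabAnn R C) ∧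
        Tower (T : Set R) n C by
    obtain ⟨C, n, i, r, hfin, hir, -, hT⟩ := H S fun t ht => hS ▸ Ideal.subset_span ht
    refine h.retract i r hir (Tower.mem h (S := (S : Set R)) (fun q hq => hM q ?_) n hT)
    rw [← hS]
    exact Ideal.span_le.2 hq
  intro T
  classical
  induction T using Finset.induction_on with
  | empty =>
    exact fun _ => ⟨.of R M, 0, LinearMap.id, LinearMap.id, ‹_›, fun _ => rfl,
      fun s hs => ⟨1, by simpa using hs⟩, fun t ht => by simp at ht⟩
  | insert t T htT ih =>
    intro hT
    obtain ⟨C, n, i, r, hfin, hir, hC, hTow⟩ := ih fun t ht => hT t (Finset.mem_insert_of_mem ht)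
    obtain ⟨k, hk⟩ := hC t (hT t (Finset.mem_insert_self t T))
    obtain ⟨m, π, hπ⟩ := Module.Finite.exists_fin' R C
    have hjπ : Function.Exact (LinearMap.ker π).subtype π := LinearMap.exact_subtype_ker_map π
    obtain ⟨σ, hσ⟩ := Push.exists_section (j := (LinearMap.ker π).subtype) Subtype.val_injective
      hjπ hπ hk
    refine ⟨.of R (Push (LinearMap.ker π).subtype (t ^ k • LinearMap.id)), n + 1, σ ∘ₗ i,
      r ∘ₗ Push.proj _ hjπ, ?_, ?_, ?_, ?_⟩
    · exact inferInstanceAs (Module.Finite R (Push (LinearMap.ker π).subtype _))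
    · intro x
      simp [hσ, hir]
    · intro s hs
      obtain ⟨l, hl⟩ := hC s hs
      exact ⟨l * 3, by rw [pow_mul]; exact Push.mem_stabAnn_pow Subtype.val_injective hjπ hπ _ hl⟩
    · rw [Finset.coe_insert]
      exact Tower.push t k n _ π Subtype.val_injective hjπ hπ hTow

end Tower

/-! ### Minimal generators and the Nakayama lemma at a prime -/

section Nakayama

variable {R : Type} [CommRing R] {p : Ideal R}
variable {K M U : Type} [AddCommGroup K] [Module R K] [AddCommGroup M] [Module R M]
  [AddCommGroup U] [Module R U]

/-- Modulo `p`, such a polynomial is a power of `X`. -/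
theorem eval_notMem_of_monic [p.IsPrime] {f : Polynomial R} (hf : f.Monic)
    (hcoeff : ∀ k, f.coeff k ∈ p ^ (f.natDegree - k)) {x : R} (hx : x ∉ p) : f.eval x ∉ p := by
  rw [Polynomial.eval_eq_sum_range, Finset.sum_range_succ, hf.coeff_natDegree, one_mul]
  intro h
  refine hx (Ideal.IsPrime.mem_of_pow_mem ‹_› _ (((Submodule.add_mem_iff_right _ ?_).1 h)))
  refine Ideal.sum_mem _ fun k hk => Ideal.mul_mem_right _ _ ?_
  exact Ideal.pow_le_self (Nat.sub_ne_zero_of_lt (Finset.mem_range.1 hk)) (hcoeff k)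

/-- A version of the Nakayama lemma at the prime `p`: an endomorphism of `K` congruent to a scalar
`s ∉ p` modulo `p` is invertible up to a scalar outside `p`. -/
theorem exists_quasi_inverse [p.IsPrime] [Module.Finite R K] (f : K →ₗ[R] K)
    (hf : ∀ x, f x ∈ p • (⊤ : Submodule R K)) {s : R} (hs : s ∉ p) :
    ∃ (γ : K →ₗ[R] K) (s' : R), s' ∉ p ∧ ∀ x, γ (s • x + f x) = s' • x := by
  obtain ⟨P, hP, -, hcoeff, hPf⟩ :=
    LinearMap.exists_monic_and_natDegree_eq_and_coeff_mem_pow_and_aeval_eq_zero R f p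
      (by rintro _ ⟨x, rfl⟩; exact hf x)
  have hns : -s ∉ p := by simpa using hs
  obtain ⟨Q, hQ⟩ := Polynomial.X_sub_C_dvd_sub_C_eval (a := -s) (p := P)
  refine ⟨Polynomial.aeval f Q, -P.eval (-s), by simpa using eval_notMem_of_monic hP hcoeff hns,
    fun x => ?_⟩
  have h := congrArg (Polynomial.aeval f) hQ
  rw [mul_comm] at h
  simp only [map_sub, map_mul, Polynomial.aeval_X, Polynomial.aeval_C, hPf] at h
  have h2 := LinearMap.congr_fun h x
  simp only [Module.End.mul_apply, LinearMap.sub_apply, Module.algebraMap_end_apply, zero_sub,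
    neg_smul, sub_neg_eq_add] at h2
  rw [neg_smul, add_comm, ← h2]
  rfl

/-- The Nakayama lemma at `p`: a module with `s K ⊆ p K` for some `s ∉ p` vanishes at `p`. -/
theorem exists_mem_annihilator_of_smul_mem [p.IsPrime] [Module.Finite R K] {s : R} (hs : s ∉ p)
    (h : ∀ x : K, s • x ∈ p • (⊤ : Submodule R K)) : ∃ s' ∉ p, s' ∈ Module.annihilator R K := by
  obtain ⟨γ, s', hs', hquasi⟩ := exists_quasi_inverse (-(s • LinearMap.id : K →ₗ[R] K))
    (fun x => by simpa using h x) hs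
  exact ⟨s', hs', Module.mem_annihilator.2 fun x => by rw [← hquasi]; simp⟩

/-- Minimal generators of `U` at the prime `p`: they generate `U` up to a scalar outside `p`, and
all relations between them have coefficients in `p`. -/
theorem exists_minimal_generators [p.IsPrime] [Module.Finite R U] :
    ∃ (m : ℕ) (x : Fin m → U) (s : R), s ∉ p ∧ (∀ u, s • u ∈ Submodule.span R (Set.range x)) ∧
      ∀ a : Fin m → R, ∑ i, a i • x i = 0 → ∀ i, a i ∈ p := by
  classical
  have hex : ∃ m : ℕ, ∃ (x : Fin m → U) (s : R), s ∉ p ∧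
      ∀ u, s • u ∈ Submodule.span R (Set.range x) := by
    obtain ⟨m, x, hx⟩ := Module.Finite.exists_fin (R := R) (M := U)
    exact ⟨m, x, 1, Ideal.IsPrime.one_notMem ‹_›, fun u => by rw [hx]; trivial⟩
  obtain ⟨x, s, hs, hx⟩ := Nat.find_spec hex
  refine ⟨_, x, s, hs, hx, fun a ha i₀ => ?_⟩
  by_contra hi₀
  -- A relation with a coefficient outside `p` makes one of the generators redundant at `p`.
  obtain ⟨m, hm⟩ : ∃ m, Nat.find hex = m + 1 := Nat.exists_eq_succ_of_ne_zero (by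
    intro h0; exact (h0 ▸ i₀ : Fin 0).elim0)
  refine Nat.find_min hex (m := m) (by omega) ?_
  generalize hn : Nat.find hex = n at *
  subst hm
  refine ⟨fun i => x (i₀.succAbove i), a i₀ * s, fun hmem => ?_, fun u => ?_⟩
  · exact (Ideal.IsPrime.mem_or_mem ‹_› hmem).elim hi₀ hs
  · rw [mul_smul]
    refine Submodule.span_induction (p := fun v _ => a i₀ • v ∈ _) ?_ ?_ ?_ ?_ (hx u)
    · rintro _ ⟨i, rfl⟩
      obtain rfl | ⟨k, rfl⟩ := i₀.eq_self_or_eq_succAbove i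
      · rw [Fin.sum_univ_succAbove _ i] at ha
        rw [eq_neg_of_add_eq_zero_left ha]
        exact Submodule.neg_mem _ (Submodule.sum_mem _ fun k _ =>
          Submodule.smul_mem _ _ (Submodule.subset_span ⟨k, rfl⟩))
      · exact Submodule.smul_mem _ _ (Submodule.subset_span ⟨k, rfl⟩)
    · simp
    · intro v w _ _ hv hw
      rw [smul_add]; exact Submodule.add_mem _ hv hw
    · intro r v _ hv
      rw [smul_comm]; exact Submodule.smul_mem _ _ hv

theorem pi_mem_smul_top {ι : Type} [Fintype ι] {I : Ideal R} (v : ι → M)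
    (h : ∀ i, v i ∈ I • (⊤ : Submodule R M)) : v ∈ I • (⊤ : Submodule R (ι → M)) := by
  classical
  rw [← Finset.univ_sum_single v]
  refine Submodule.sum_mem _ fun i _ => ?_
  have := Submodule.mem_map_of_mem (f := LinearMap.single R (fun _ : ι => M) i) (h i)
  rw [Submodule.map_smul''] at this
  exact Submodule.smul_mono le_rfl le_top this

theorem exists_minimal_cover [IsLocalRing R] [Module.Finite R U] :
    ∃ (m : ℕ) (π : (Fin m → R) →ₗ[R] U), Function.Surjective π ∧
      LinearMap.ker π ≤ IsLocalRing.maximalIdeal R • (⊤ : Submodule R (Fin m → R)) := by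
  obtain ⟨m, x, s, hs, hx, hrel⟩ :=
    exists_minimal_generators (p := IsLocalRing.maximalIdeal R) (U := U)
  have hunit : IsUnit s := by simpa using hs
  obtain ⟨v, hv⟩ := hunit.exists_left_inv
  refine ⟨m, Fintype.linearCombination R x, fun u => ?_, fun a ha => pi_mem_smul_top _ fun i => ?_⟩
  · obtain ⟨c, hc⟩ := (Submodule.mem_span_range_iff_exists_fun R).1
      (Submodule.smul_mem _ v (hx u))
    refine ⟨c, ?_⟩
    rw [Fintype.linearCombination_apply, hc, smul_smul, hv, one_smul]
  · rw [smul_eq_mul, Ideal.mul_top]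
    exact hrel a (by simpa [Fintype.linearCombination_apply] using ha) i

/-- For `t ∈ p`, the pushout of a free cover of `C` along multiplication by `t` is not free at `p`
when `C` is not. Indeed a map splitting the pushout up to `s ∉ p` gives a map `ε` from the free
module to the syzygy which restricts to `s + t θ` there; this is invertible at `p`, so the cover of
`C` splits at `p`. -/
theorem stabAnn_push_le [p.IsPrime] [IsNoetherianRing R] {P C : Type} [AddCommGroup P] [Module R P]
    [AddCommGroup C] [Module R C] [Module.Finite R P] [Module.Projective R P]
    (π : P →ₗ[R] C) (hπ : Function.Surjective π) {t : R} (ht : t ∈ p) (hC : stabAnn R C ≤ p) :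
    stabAnn R (Push (LinearMap.ker π).subtype
      (t • (LinearMap.id : LinearMap.ker π →ₗ[R] LinearMap.ker π))) ≤ p := by
  intro s hs
  by_contra hsp
  have hjπ : Function.Exact (LinearMap.ker π).subtype π := LinearMap.exact_subtype_ker_map π
  set φ := (t • (LinearMap.id : LinearMap.ker π →ₗ[R] LinearMap.ker π)) with hφ
  obtain ⟨σ, hσ⟩ := exists_lift_of_mem_stabAnn hs (Submodule.mkQ _) (Submodule.mkQ_surjective _)
  have hσ' : ∀ x, π (σ x).2 = s • Push.proj φ hjπ x := by
    intro x
    have h1 := Push.inV_add_inP (LinearMap.ker π).subtype φ (σ x).1 (σ x).2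
    have := congrArg (Push.proj φ hjπ) (h1.trans (hσ x))
    simpa using this
  let ε : P →ₗ[R] LinearMap.ker π := LinearMap.codRestrict _
    (s • LinearMap.id - LinearMap.snd R _ _ ∘ₗ σ ∘ₗ Push.inP _ _) (fun b => by
      simp [hσ'])
  let θ : LinearMap.ker π →ₗ[R] LinearMap.ker π := LinearMap.codRestrict _
    (-(LinearMap.snd R _ _ ∘ₗ σ ∘ₗ Push.inV _ _)) (fun b => by simp [hσ'])
  have hε : ∀ b, (ε b : P) = s • b - (σ (Push.inP _ _ b)).2 := fun _ => rfl
  have hθ : ∀ w, (θ w : P) = -(σ (Push.inV _ _ w)).2 := fun _ => rfl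
  have hεθ : ∀ w : LinearMap.ker π, ε w = s • w + (t • θ) w := by
    intro w
    apply Subtype.ext
    have := Push.glue (LinearMap.ker π).subtype φ w
    simp only [hφ, LinearMap.smul_apply, LinearMap.id_apply, Submodule.subtype_apply] at this
    simp [hε, hθ, ← this, sub_eq_add_neg]
  obtain ⟨γ, s', hs', hγ⟩ := exists_quasi_inverse (t • θ)
    (fun x => Submodule.smul_mem_smul ht (Submodule.mem_top (x := θ x))) hsp
  refine hs' (hC ?_)
  let e := hjπ.linearEquivOfSurjective hπ
  have hle : LinearMap.range (LinearMap.ker π).subtype ≤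
      LinearMap.ker (s' • LinearMap.id - (LinearMap.ker π).subtype ∘ₗ γ ∘ₗ ε) := by
    rintro _ ⟨w, rfl⟩
    simp only [LinearMap.mem_ker, LinearMap.sub_apply, LinearMap.comp_apply,
      Submodule.subtype_apply, hεθ, hγ]
    simp
  refine mem_stabAnn_of_factor (Submodule.liftQ _ _ hle ∘ₗ e.symm.toLinearMap) π fun c => ?_
  obtain ⟨b, rfl⟩ := hπ c
  have he : e.symm (π b) = Submodule.Quotient.mk b := by
    rw [LinearEquiv.symm_apply_eq]; rfl
  simp [he]

/-- If some module in `𝒳` is not free at `p`, then there is one whose nonfree locus is exactly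
the closure of `p`. -/
theorem IsResolving.exists_radical_stabAnn [IsNoetherianRing R] [hp : p.IsPrime]
    {𝒳 : Set (ModuleCat.{0} R)} (h : IsResolving R 𝒳) (hex : ∃ X ∈ 𝒳, stabAnn R X ≤ p) :
    ∃ X ∈ 𝒳, stabAnn R X ≤ p ∧ p ≤ (stabAnn R X).radical := by
  obtain ⟨X, hX⟩ := hex
  obtain ⟨I, ⟨X, hX, hXp, rfl⟩, hmax⟩ :=
    set_has_maximal_iff_noetherian.2 (inferInstanceAs (IsNoetherian R R))
      {I | ∃ X ∈ 𝒳, stabAnn R X ≤ p ∧ I = (stabAnn R X).radical} ⟨_, X, hX.1, hX.2, rfl⟩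
  refine ⟨X, hX, hXp, fun t ht => ?_⟩
  have := h.fg X hX
  obtain ⟨m, π, hπ⟩ := Module.Finite.exists_fin' R X
  have hjπ : Function.Exact (LinearMap.ker π).subtype π := LinearMap.exact_subtype_ker_map π
  have hE := Push.mem h (t • LinearMap.id : LinearMap.ker π →ₗ[R] LinearMap.ker π)
    Subtype.val_injective hjπ hπ (h.ker π hπ (h.free _) hX) hX
  have hle : (stabAnn R X).radical ≤ (stabAnn R (Push (LinearMap.ker π).subtype
      (t • LinearMap.id : LinearMap.ker π →ₗ[R] LinearMap.ker π))).radical := by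
    intro s ⟨n, hs⟩
    exact ⟨n * 3, by rw [pow_mul]; exact Push.mem_stabAnn_pow Subtype.val_injective hjπ hπ _ hs⟩
  have hnlt := hmax _ ⟨_, hE, stabAnn_push_le π hπ ht hXp, rfl⟩
  have heq := hle.antisymm (not_lt_iff_le_imp_ge.1 hnlt hle)
  rw [heq]
  exact Ideal.le_radical (Push.mem_stabAnn_self t)

end Nakayama

/-! ### Tor of the transpose -/

section Transpose

variable {R : Type} [CommRing R]

/-- Left exactness of duality for a presentation `F₁ → F₀ → X → 0`, with `F₀* → F₁*` factored
through its image `Ω`. -/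
theorem exact_dualMap {F₀ F₁ X Ω : Type} [AddCommGroup F₀] [Module R F₀] [AddCommGroup F₁]
    [Module R F₁] [AddCommGroup X] [Module R X] [AddCommGroup Ω] [Module R Ω]
    (d : F₁ →ₗ[R] F₀) (π : F₀ →ₗ[R] X) (hπ : Function.Surjective π) (hd : Function.Exact d π)
    (r : Module.Dual R F₀ →ₗ[R] Ω) (i : Ω →ₗ[R] Module.Dual R F₁) (hi : Function.Injective i)
    (hir : ∀ f, i (r f) = f ∘ₗ d) : Function.Exact π.dualMap r := by
  intro f
  rw [← map_eq_zero_iff i hi, hir]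
  constructor
  · intro hf
    have hf' : ∀ x, f (d x) = 0 := LinearMap.congr_fun hf
    let e := hd.linearEquivOfSurjective hπ
    refine ⟨Submodule.liftQ (LinearMap.range d) f (by rintro _ ⟨x, rfl⟩; exact hf' x) ∘ₗ
      e.symm.toLinearMap, LinearMap.ext fun b => ?_⟩
    have he : e.symm (π b) = Submodule.Quotient.mk b := by
      rw [LinearEquiv.symm_apply_eq]; rfl
    simp only [LinearMap.dualMap_apply, LinearMap.comp_apply, LinearEquiv.coe_coe, he]
    rfl
  · rintro ⟨g, rfl⟩
    refine LinearMap.ext fun x => ?_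
    simp [hd.apply_apply_eq_zero]

/-- If `F₁ → F₀ → X → 0` is a presentation by free modules and `Ω` is the image of `F₀* → F₁*`,
then the kernel of `Ω ⊗ X → F₁* ⊗ X` has annihilator the stable annihilator of `X`. -/
theorem annihilator_ker_rTensor_eq {F₀ F₁ X Ω : Type} [AddCommGroup F₀] [Module R F₀]
    [AddCommGroup F₁] [Module R F₁] [AddCommGroup X] [Module R X] [AddCommGroup Ω] [Module R Ω]
    [Module.Finite R F₀] [Module.Projective R F₀] [Module.Finite R F₁] [Module.Projective R F₁]
    (d : F₁ →ₗ[R] F₀) (π : F₀ →ₗ[R] X) (hπ : Function.Surjective π) (hd : Function.Exact d π)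
    (r : Module.Dual R F₀ →ₗ[R] Ω) (hr : Function.Surjective r) (i : Ω →ₗ[R] Module.Dual R F₁)
    (hi : Function.Injective i) (hir : ∀ f, i (r f) = f ∘ₗ d) :
    Module.annihilator R (LinearMap.ker (LinearMap.rTensor X i)) = stabAnn R X := by
  apply le_antisymm
  · intro s hs
    -- The tensor `u` corresponds to `π`, and its image in `Ω ⊗ X` lies in the kernel.
    obtain ⟨u, hu⟩ := (dualTensorHom_bijective (R := R) (M := F₀) (N := X)).2 π
    have hv : LinearMap.rTensor X r u ∈ LinearMap.ker (LinearMap.rTensor X i) := by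
      have hcomp : i ∘ₗ r = d.dualMap := LinearMap.ext hir
      rw [LinearMap.mem_ker, ← LinearMap.comp_apply, ← LinearMap.rTensor_comp, hcomp]
      apply (dualTensorHom_bijective (R := R) (M := F₁) (N := X)).1
      rw [map_zero]
      refine (dualTensorHom_map d (LinearMap.id : X →ₗ[R] X) u).trans ?_
      rw [hu]
      refine LinearMap.ext fun x => ?_
      simp [hd.apply_apply_eq_zero]
    have hsv : LinearMap.rTensor X r (s • u) = 0 := by
      rw [map_smul]
      exact congrArg Subtype.val (Module.mem_annihilator.1 hs ⟨_, hv⟩)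
    obtain ⟨z, hz⟩ := (rTensor_exact X (exact_dualMap d π hπ hd r i hi hir) hr _).1 hsv
    refine mem_stabAnn.2 ⟨z, LinearMap.ext fun x => ?_⟩
    obtain ⟨b, rfl⟩ := hπ x
    have h1 := dualTensorHom_map π (LinearMap.id : X →ₗ[R] X) z
    have h2 : TensorProduct.map π.dualMap (LinearMap.id : X →ₗ[R] X) z = s • u := hz
    rw [h2, map_smul, hu] at h1
    exact (LinearMap.congr_fun h1 b).symm
  · intro s hs
    obtain ⟨ι, _, f, g, hfg⟩ := exists_factor_of_mem_stabAnn hs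
    refine Module.mem_annihilator.2 fun y => Subtype.ext ?_
    -- Multiplication by `s` on the kernel factors through the kernel for a free module in place of
    -- `X`, which is zero.
    have hinj := Module.Flat.rTensor_preserves_injective_linearMap (M := ι → R) i hi
    have h0 : LinearMap.lTensor Ω f y.1 = 0 := by
      apply hinj
      rw [map_zero, ← LinearMap.comp_apply, LinearMap.rTensor_comp_lTensor,
        ← LinearMap.lTensor_comp_rTensor, LinearMap.comp_apply, LinearMap.mem_ker.1 y.2, map_zero]
    have hgf : g ∘ₗ f = s • LinearMap.id := LinearMap.ext hfg
    have h1 : LinearMap.lTensor Ω (g ∘ₗ f) y.1 = 0 := by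
      rw [LinearMap.lTensor_comp, LinearMap.comp_apply, h0, map_zero]
    rw [hgf, LinearMap.lTensor_smul, LinearMap.lTensor_id] at h1
    exact h1

/-- For an exact sequence `Ω → F → T → 0` whose terms stay in `𝒳` after tensoring with `X`, the
kernel of `Ω ⊗ X → F ⊗ X` lies in `𝒳`. -/
theorem IsResolving.ker_rTensor {𝒳 : Set (ModuleCat.{0} R)} (h : IsResolving R 𝒳)
    {F T X Ω : Type} [AddCommGroup F] [Module R F]
    [AddCommGroup T] [Module R T] [AddCommGroup X] [Module R X] [AddCommGroup Ω] [Module R Ω]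
    (i : Ω →ₗ[R] F) (q : F →ₗ[R] T) (hq : Function.Surjective q) (hiq : Function.Exact i q)
    (hF : ModuleCat.of R (F ⊗[R] X) ∈ 𝒳) (hT : ModuleCat.of R (T ⊗[R] X) ∈ 𝒳)
    (hΩ : ModuleCat.of R (Ω ⊗[R] X) ∈ 𝒳) :
    ModuleCat.of R (LinearMap.ker (LinearMap.rTensor X i)) ∈ 𝒳 := by
  refine h.ker_of_range _ hΩ ?_
  have hker := h.ker (LinearMap.rTensor X q) (LinearMap.rTensor_surjective _ hq) hF hT
  rwa [(rTensor_exact X hiq hq).linearMap_ker_eq] at hker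

variable {𝒳 : Set (ModuleCat.{0} R)}

theorem exists_annihilator_eq_of_presentation (h : IsResolving R 𝒳) (htens : ClosedUnderTensor R 𝒳)
    {F₀ F₁ X T : Type} [AddCommGroup F₀] [Module R F₀]
    [AddCommGroup F₁] [Module R F₁] [AddCommGroup X] [Module R X] [AddCommGroup T] [Module R T]
    [Module.Finite R F₀] [Module.Projective R F₀] [Module.Finite R F₁] [Module.Projective R F₁]
    (d : F₁ →ₗ[R] F₀) (π : F₀ →ₗ[R] X) (hπ : Function.Surjective π) (hd : Function.Exact d π)
    (q : Module.Dual R F₁ →ₗ[R] T) (hq : Function.Surjective q) (hdq : Function.Exact d.dualMap q)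
    (hX : ModuleCat.of R X ∈ 𝒳) (hT : ModuleCat.of R T ∈ 𝒳) :
    ∃ Y ∈ 𝒳, Module.annihilator R Y = stabAnn R X := by
  have hF : ModuleCat.of R (Module.Dual R F₁) ∈ 𝒳 := h.projective
  have hΩ := h.ker q hq hF hT
  have hmem : ∀ f, d.dualMap f ∈ LinearMap.ker q := fun f => hdq.apply_apply_eq_zero f
  have hr : Function.Surjective (LinearMap.codRestrict (LinearMap.ker q) d.dualMap hmem) := by
    rintro ⟨f, hf⟩
    obtain ⟨g, rfl⟩ := (hdq f).1 hf
    exact ⟨g, rfl⟩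
  exact ⟨_, h.ker_rTensor (X := X) (LinearMap.ker q).subtype q hq
      (LinearMap.exact_subtype_ker_map q) (htens _ hF _ hX) (htens _ hT _ hX) (htens _ hΩ _ hX),
    annihilator_ker_rTensor_eq d π hπ hd _ hr _ Subtype.val_injective fun _ => rfl⟩

variable [IsNoetherianRing R]

/-- For `X ∈ 𝒳` with transpose `T`, the module `Tor₁(T, X)` lies in `𝒳`, and its annihilator is the
stable annihilator of `X`. -/
theorem exists_annihilator_eq_stabAnn [IsLocalRing R] (h : IsResolving R 𝒳)
    (htens : ClosedUnderTensor R 𝒳) (htr : ClosedUnderTranspose R 𝒳) {X : ModuleCat.{0} R}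
    (hX : X ∈ 𝒳) : ∃ Y ∈ 𝒳, Module.annihilator R Y = stabAnn R X := by
  have := h.fg X hX
  obtain ⟨m, π, hπ, hmin⟩ := exists_minimal_cover (R := R) (U := X)
  obtain ⟨n, ρ, hρ, hmin'⟩ := exists_minimal_cover (R := R) (U := LinearMap.ker π)
  set d := (LinearMap.ker π).subtype ∘ₗ ρ with hdρ
  have hd : Function.Exact d π := by
    intro x
    constructor
    · intro hx
      obtain ⟨y, hy⟩ := hρ ⟨x, hx⟩
      exact ⟨y, by simp [d, hy]⟩
    · rintro ⟨y, rfl⟩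
      exact (ρ y).2
  have hT := htr X hX (.of R (((Fin n → R) →ₗ[R] R) ⧸ LinearMap.range (LinearMap.lcomp R R d)))
    ⟨n, m, d, π, hπ, hd, hmin, by
      rw [hdρ, LinearMap.ker_comp, Submodule.ker_subtype]; exact hmin', ⟨LinearEquiv.refl R _⟩⟩
  refine exists_annihilator_eq_of_presentation h htens d π hπ hd
    (LinearMap.range (LinearMap.lcomp R R d)).mkQ (Submodule.mkQ_surjective _) (fun f => ?_) hX hT
  exact Submodule.Quotient.mk_eq_zero _

/-- If `𝒳` has a module that is not free at `p`, then it has one that is moreover annihilated by a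
power of `p`. -/
theorem exists_level [IsLocalRing R] {p : Ideal R} [p.IsPrime] (h : IsResolving R 𝒳)
    (htens : ClosedUnderTensor R 𝒳) (htr : ClosedUnderTranspose R 𝒳)
    (hex : ∃ X ∈ 𝒳, stabAnn R X ≤ p) :
    ∃ L ∈ 𝒳, stabAnn R L ≤ p ∧ ∃ N : ℕ, p ^ N ≤ Module.annihilator R L := by
  obtain ⟨X, hX, hXp, hpX⟩ := h.exists_radical_stabAnn hex
  obtain ⟨Y, hY, hYX⟩ := exists_annihilator_eq_stabAnn h htens htr hX
  have := h.fg Y hY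
  obtain ⟨N, hN⟩ := Ideal.exists_pow_le_of_le_radical_of_fg hpX
    ((isNoetherianRing_iff_ideal_fg R).1 ‹_› p)
  rw [← hYX] at hN hXp
  -- If `Y` is free at `p`, then it is nonzero there, so `X` is a direct summand of `X ⊗ Y` at `p`.
  by_cases hYp : stabAnn R Y ≤ p
  · exact ⟨Y, hY, hYp, N, hN⟩
  · refine ⟨.of R (X ⊗[R] Y), htens _ hX _ hY, ?_, N, fun a ha => ?_⟩
    · obtain ⟨s, hs, hsp⟩ := SetLike.not_le_iff_exists.1 hYp
      obtain ⟨ι, _, f, g, hfg⟩ := exists_factor_of_mem_stabAnn hs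
      obtain ⟨y, i, hyi⟩ : ∃ y i, f y i ∉ p := by
        by_contra! hcon
        obtain ⟨s', hs', hs'Y⟩ := exists_mem_annihilator_of_smul_mem (K := Y) hsp fun y => by
          rw [← hfg]
          have h1 : f y ∈ p • (⊤ : Submodule R (ι → R)) :=
            pi_mem_smul_top _ fun i => by
              rw [smul_eq_mul, Ideal.mul_top]; exact hcon y i
          have := Submodule.mem_map_of_mem (f := g) h1
          rw [Submodule.map_smul''] at this
          exact Submodule.smul_mono le_rfl le_top this
        exact hs' (hXp hs'Y)
      rw [hYX] at hXp
      intro r hr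
      have := mem_stabAnn_of_comp (r := f y i) ((TensorProduct.mk R X Y).flip y)
        ((TensorProduct.rid R X).toLinearMap ∘ₗ LinearMap.lTensor X (LinearMap.proj i ∘ₗ f))
        (fun x => by simp) hr
      exact (Ideal.IsPrime.mem_or_mem ‹_› (hXp this)).resolve_right hyi
    · refine Module.mem_annihilator.2 fun z => ?_
      change a • (z : X ⊗[R] Y) = 0
      induction z using TensorProduct.induction_on with
      | zero => simp
      | tmul x y => rw [← tmul_smul, Module.mem_annihilator.1 (hN ha), tmul_zero]
      | add z w hz hw => rw [smul_add, hz, hw, add_zero]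

end Transpose

/-! ### Residue rings in resolving subcategories -/

section ResidueRing

variable {R : Type} [CommRing R] {p : Ideal R} {𝒳 : Set (ModuleCat.{0} R)}

/-- Assuming `R ⧸ q ∈ 𝒳` for all primes `q` strictly above `p`, every module annihilated by a power
of `p` and by some element outside `p` lies in `𝒳`. -/
theorem IsResolving.small_mem [IsNoetherianRing R] [p.IsPrime] (h : IsResolving R 𝒳)
    (hq : ∀ q : PrimeSpectrum R, p < q.asIdeal → ModuleCat.of R (R ⧸ q.asIdeal) ∈ 𝒳)
    {M : Type} [AddCommGroup M] [Module R M] [Module.Finite R M] {n : ℕ} {s : R} (hs : s ∉ p)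
    (hn : p ^ n ≤ Module.annihilator R M) (hsM : s ∈ Module.annihilator R M) :
    ModuleCat.of R M ∈ 𝒳 := by
  refine h.of_support fun q hqM => hq q (lt_of_le_of_ne ?_ ?_)
  · exact q.2.le_of_pow_le (hn.trans hqM)
  · rintro rfl
    exact hs (hqM hsM)

theorem exists_factor_of_ker_le {P M N : Type} [AddCommGroup P] [Module R P] [AddCommGroup M]
    [Module R M] [AddCommGroup N] [Module R N] (g : P →ₗ[R] M) (hg : Function.Surjective g)
    (f : P →ₗ[R] N) (hgf : ∀ x, g x = 0 → f x = 0) : ∃ f' : M →ₗ[R] N, ∀ x, f' (g x) = f x := by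
  refine ⟨(LinearMap.ker g).liftQ f hgf ∘ₗ (g.quotKerEquivOfSurjective hg).symm.toLinearMap,
    fun x => ?_⟩
  have : (g.quotKerEquivOfSurjective hg).symm (g x) = Submodule.Quotient.mk x := by
    rw [LinearEquiv.symm_apply_eq]; rfl
  rw [LinearMap.comp_apply, LinearEquiv.coe_coe, this]
  rfl

/-- A coordinate functional modulo `p` attached to a system of minimal generators at `p`. -/
theorem exists_coordinate {M : Type} [AddCommGroup M] [Module R M] {m : ℕ} (x : Fin m → M)
    (hx : Submodule.span R (Set.range x) = ⊤)
    (hrel : ∀ a : Fin m → R, ∑ i, a i • x i = 0 → ∀ i, a i ∈ p) (i : Fin m) :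
    ∃ f : M →ₗ[R] R ⧸ p, f (x i) = 1 := by
  classical
  obtain ⟨f, hf⟩ := exists_factor_of_ker_le (Fintype.linearCombination R x)
    (LinearMap.range_eq_top.1 (by rw [Fintype.range_linearCombination, hx]))
    (p.mkQ ∘ₗ LinearMap.proj i) fun a ha =>
      (Submodule.Quotient.mk_eq_zero p).2
        (hrel a (by simpa [Fintype.linearCombination_apply] using ha) i)
  refine ⟨f, ?_⟩
  have := hf (Pi.single i 1)
  rw [Fintype.linearCombination_apply_single, one_smul] at this
  rw [this]
  simp

/-- Up to an element outside `p`, a module of `𝒳` killed by a power of `p` may be replaced by a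
submodule in `𝒳` generated by elements that are independent modulo `p`. -/
theorem IsResolving.exists_generated [IsNoetherianRing R] [p.IsPrime] (h : IsResolving R 𝒳)
    (hq : ∀ q : PrimeSpectrum R, p < q.asIdeal → ModuleCat.of R (R ⧸ q.asIdeal) ∈ 𝒳)
    {M : Type} [AddCommGroup M] [Module R M] (hM : ModuleCat.of R M ∈ 𝒳) {n : ℕ}
    (hn : p ^ n ≤ Module.annihilator R M) :
    ∃ (W : Submodule R M) (m : ℕ) (x : Fin m → W) (s : R), s ∉ p ∧ ModuleCat.of R W ∈ 𝒳 ∧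
      (∀ u, s • u ∈ W) ∧ Submodule.span R (Set.range x) = ⊤ ∧
      ∀ a : Fin m → R, ∑ i, a i • x i = 0 → ∀ i, a i ∈ p := by
  have := h.finite hM
  obtain ⟨m, x, s, hs, hsx, hrel⟩ := exists_minimal_generators (p := p) (U := M)
  refine ⟨Submodule.span R (Set.range x), m,
    fun i => ⟨x i, Submodule.subset_span (Set.mem_range_self i)⟩, s, hs, ?_, hsx, ?_, ?_⟩
  · refine h.submodule _ hM (h.small_mem hq hs (n := n) ?_ ?_)
    · exact hn.trans ((Submodule.mkQ _).annihilator_le_of_surjective (Submodule.mkQ_surjective _))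
    · refine Module.mem_annihilator.2 fun u => ?_
      obtain ⟨u, rfl⟩ := Submodule.Quotient.mk_surjective _ u
      rw [← Submodule.Quotient.mk_smul, Submodule.Quotient.mk_eq_zero]
      exact hsx u
  · exact Submodule.span_range_subtype_eq_top_iff _ _ |>.2 rfl
  · intro a ha
    refine hrel a ?_
    simpa using congrArg Subtype.val ha

/-- A nonfree module of `𝒳` of finite level admits, after a replacement, a presentation with
relations in `p` whose syzygy has annihilator inside `p`. -/
theorem IsResolving.exists_cover [IsNoetherianRing R] [p.IsPrime] (h : IsResolving R 𝒳)
    (hq : ∀ q : PrimeSpectrum R, p < q.asIdeal → ModuleCat.of R (R ⧸ q.asIdeal) ∈ 𝒳)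
    {L : Type} [AddCommGroup L] [Module R L] (hL : ModuleCat.of R L ∈ 𝒳) (hLp : stabAnn R L ≤ p)
    {n : ℕ} (hn : p ^ n ≤ Module.annihilator R L) :
    ∃ C ∈ 𝒳, ∃ (m : ℕ) (π : (Fin m → R) →ₗ[R] C), Function.Surjective π ∧
      (∀ a ∈ LinearMap.ker π, ∀ i, a i ∈ p) ∧ Module.annihilator R (LinearMap.ker π) ≤ p := by
  obtain ⟨W, m, x, s, hs, hW, hsW, hx, hrel⟩ := h.exists_generated hq hL hn
  have hπ : Function.Surjective (Fintype.linearCombination R x) :=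
    LinearMap.range_eq_top.1 (by rw [Fintype.range_linearCombination, hx])
  refine ⟨.of R W, hW, m, Fintype.linearCombination R x, hπ, fun a ha => hrel a ?_, fun r hr => ?_⟩
  · simpa [Fintype.linearCombination_apply] using ha
  · -- multiplication by `r` on the free cover kills the syzygy, so `r` is in the stable annihilator
    obtain ⟨f, hf⟩ := exists_factor_of_ker_le _ hπ (r • LinearMap.id) fun a ha => by
      have := Module.mem_annihilator.1 hr ⟨a, ha⟩
      simpa using congrArg Subtype.val this
    have hrW : r ∈ stabAnn R W :=
        mem_stabAnn_of_factor f (Fintype.linearCombination R x) fun u => by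
      obtain ⟨a, rfl⟩ := hπ u
      rw [hf]; simp only [LinearMap.smul_apply, LinearMap.id_apply, map_smul]
    have := mem_stabAnn_of_comp (r := s)
      (LinearMap.codRestrict W (s • LinearMap.id) (fun u => hsW u)) W.subtype (fun u => rfl) hrW
    exact (Ideal.IsPrime.mem_or_mem ‹_› (hLp this)).resolve_right hs

/-- There is a module `Z ∈ 𝒳`, killed by a power of `p` and nonzero at `p`, with
`K ⊗ Z → R ^ m ⊗ Z` vanishing. Among the modules of `𝒳` that are nonzero at `p` and killed by a
power `p ^ N`, choose one with `N` minimal. The kernel of `R ^ m ⊗ Z → C ⊗ Z` is in `𝒳` and killed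
by `p ^ (N - 1)`, since the entries of `j` are in `p`. By minimality it is killed by some
`s ∉ p`, and `Z` is replaced by `s Z`. -/
theorem IsResolving.exists_killed [IsNoetherianRing R] [hp : p.IsPrime] (h : IsResolving R 𝒳)
    (htens : ClosedUnderTensor R 𝒳)
    (hq : ∀ q : PrimeSpectrum R, p < q.asIdeal → ModuleCat.of R (R ⧸ q.asIdeal) ∈ 𝒳)
    {K C : Type} [AddCommGroup K] [Module R K] [AddCommGroup C] [Module R C] {m : ℕ}
    (j : K →ₗ[R] (Fin m → R)) (π : (Fin m → R) →ₗ[R] C) (hπ : Function.Surjective π)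
    (hjπ : Function.Exact j π) (hC : ModuleCat.of R C ∈ 𝒳) (hj : ∀ w i, j w i ∈ p)
    (hex : ∃ N : ℕ, ∃ Z ∈ 𝒳, p ^ N ≤ Module.annihilator R Z ∧ Module.annihilator R Z ≤ p) :
    ∃ Z ∈ 𝒳, (∃ N : ℕ, p ^ N ≤ Module.annihilator R Z) ∧ Module.annihilator R Z ≤ p ∧
      ∀ w i, ∀ z : Z, j w i • z = 0 := by
  classical
  obtain ⟨Z, hZ, hNZ, hZp⟩ := Nat.find_spec hex
  set N := Nat.find hex with hN
  have hfin := h.fg Z hZ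
  have hN0 : N ≠ 0 := by
    intro h0
    rw [h0, pow_zero, Ideal.one_eq_top, top_le_iff] at hNZ
    exact hp.ne_top (top_le_iff.1 (hNZ ▸ hZp))
  have hG := h.ker (LinearMap.rTensor Z π) (LinearMap.rTensor_surjective _ hπ)
    (htens _ (h.free (Fin m)) _ hZ) (htens _ hC _ hZ)
  have hker : LinearMap.ker (LinearMap.rTensor Z π) = LinearMap.range (LinearMap.rTensor Z j) :=
    (rTensor_exact Z hjπ hπ).linearMap_ker_eq
  have htm : ∀ w (z : Z), j w ⊗ₜ[R] z ∈ LinearMap.ker (LinearMap.rTensor Z π) := fun w z => by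
    rw [hker]; exact ⟨w ⊗ₜ z, rfl⟩
  have hkill : p ^ (N - 1) ≤ Module.annihilator R (LinearMap.ker (LinearMap.rTensor Z π)) := by
    intro a ha
    suffices H : ∀ t, a • LinearMap.rTensor Z j t = 0 by
      refine Module.mem_annihilator.2 fun ⟨y, hy⟩ => Subtype.ext ?_
      rw [hker] at hy
      obtain ⟨t, rfl⟩ := hy
      exact H t
    intro t
    induction t using TensorProduct.induction_on with
    | zero => simp
    | tmul w z =>
      rw [LinearMap.rTensor_tmul, pi_eq_sum_univ' (j w), TensorProduct.sum_tmul, Finset.smul_sum]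
      refine Finset.sum_eq_zero fun i _ => ?_
      rw [TensorProduct.smul_tmul, ← TensorProduct.tmul_smul, smul_smul,
        Module.mem_annihilator.1 (hNZ ?_) z, TensorProduct.tmul_zero]
      have := Ideal.mul_mem_mul ha (hj w i)
      rwa [← pow_succ, Nat.sub_add_cancel (Nat.one_le_iff_ne_zero.2 hN0)] at this
    | add x y hx hy => rw [map_add, smul_add, hx, hy, add_zero]
  have hnot : ¬ Module.annihilator R (LinearMap.ker (LinearMap.rTensor Z π)) ≤ p := fun hle =>
    Nat.find_min hex (m := N - 1) (by omega) ⟨_, hG, hkill, hle⟩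
  obtain ⟨s, hsG, hs⟩ := SetLike.not_le_iff_exists.1 hnot
  have hsz : ∀ w i, ∀ z : Z, j w i • s • z = 0 := fun w i z => by
    have h1 : s • (j w ⊗ₜ[R] z) = 0 :=
      congrArg Subtype.val (Module.mem_annihilator.1 hsG ⟨_, htm w z⟩)
    have h2 := congrArg
      ((TensorProduct.lid R Z).toLinearMap ∘ₗ LinearMap.rTensor Z (LinearMap.proj i)) h1
    rw [smul_comm]
    rwa [map_smul, map_zero, LinearMap.comp_apply, LinearMap.rTensor_tmul, LinearEquiv.coe_coe,
      TensorProduct.lid_tmul] at h2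
  refine ⟨.of R (LinearMap.range (s • LinearMap.id : Z →ₗ[R] Z)), ?_, ⟨N, ?_⟩, ?_, ?_⟩
  · refine h.submodule _ hZ (h.small_mem hq hs (n := N) ?_ ?_)
    · exact hNZ.trans ((Submodule.mkQ _).annihilator_le_of_surjective (Submodule.mkQ_surjective _))
    · refine Module.mem_annihilator.2 fun u => ?_
      obtain ⟨u, rfl⟩ := Submodule.Quotient.mk_surjective _ u
      rw [← Submodule.Quotient.mk_smul, Submodule.Quotient.mk_eq_zero]
      exact ⟨u, rfl⟩
  · exact hNZ.trans ((Submodule.subtype _).annihilator_le_of_injective Subtype.val_injective)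
  · intro r hr
    have : r * s ∈ Module.annihilator R Z := Module.mem_annihilator.2 fun z => by
      have := congrArg Subtype.val (Module.mem_annihilator.1 hr ⟨s • z, z, rfl⟩)
      rw [mul_smul]; exact this
    exact (hp.mem_or_mem (hZp this)).resolve_right hs
  · rintro w i ⟨_, z, rfl⟩
    exact Subtype.ext (hsz w i z)

variable {K P C Z : Type} [AddCommGroup K] [Module R K] [AddCommGroup P] [Module R P]
  [AddCommGroup C] [Module R C] [AddCommGroup Z] [Module R Z]

/-- If `K ⊗ Z → P ⊗ Z` vanishes, then `(K ⊗ Z) ⧸ p (K ⊗ Z)` is a direct summand of `E ⊗ Z`, where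
`E` is the pushout of `K ^ r → P ^ r` along `w ↦ ∑ tᵢ wᵢ` and `t` generates `p`. -/
theorem IsResolving.quotient_tensor_mem (h : IsResolving R 𝒳) (htens : ClosedUnderTensor R 𝒳)
    (j : K →ₗ[R] P) (π : P →ₗ[R] C) (hj : Function.Injective j) (hjπ : Function.Exact j π)
    (hπ : Function.Surjective π) (hK : ModuleCat.of R K ∈ 𝒳) (hC : ModuleCat.of R C ∈ 𝒳)
    (hZ : ModuleCat.of R Z ∈ 𝒳) (hjZ : ∀ w (z : Z), j w ⊗ₜ[R] z = 0)
    {r : ℕ} (t : Fin r → R) (ht : Ideal.span (Set.range t) = p) :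
    ModuleCat.of R ((K ⊗[R] Z) ⧸ p • (⊤ : Submodule R (K ⊗[R] Z))) ∈ 𝒳 := by
  classical
  let φ : (Fin r → K) →ₗ[R] K := ∑ i, t i • LinearMap.proj i
  have hφ : ∀ w, φ w = ∑ i, t i • w i := fun w => by simp [φ]
  let J : (Fin r → K) →ₗ[R] (Fin r → P) := j.compLeft (Fin r)
  have hE : ModuleCat.of R (Push J φ) ∈ 𝒳 := by
    refine Push.mem (π := π.compLeft (Fin r)) h φ ?_ ?_ ?_ hK (h.pi (Fin r) hC)
    · intro a b hab
      exact funext fun i => hj (congrFun hab i)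
    · intro b
      constructor
      · intro hb
        choose a ha using fun i => (hjπ (b i)).1 (congrFun hb i)
        exact ⟨a, funext ha⟩
      · rintro ⟨a, rfl⟩
        exact funext fun i => hjπ.apply_apply_eq_zero (a i)
    · intro c
      choose b hb using fun i => hπ (c i)
      exact ⟨b, funext hb⟩
  have hle : p • (⊤ : Submodule R (K ⊗[R] Z)) ≤
      LinearMap.ker (LinearMap.rTensor Z (Push.inV J φ)) := by
    have key : ∀ i x, LinearMap.rTensor Z (Push.inV J φ) (t i • x) = 0 := by
      intro i x
      induction x using TensorProduct.induction_on with
      | zero => simp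
      | tmul k z =>
        have h1 : t i • k = φ (Pi.single i k) := by
          rw [hφ, Finset.sum_eq_single i] <;> simp +contextual
        have h2 : J (Pi.single i k) = LinearMap.single R (fun _ : Fin r => P) i (j k) := by
          ext i'
          by_cases hi : i' = i
          · subst hi; simp [J]
          · simp [J, hi]
        have h3 := congrArg (LinearMap.rTensor Z
          (Push.inP J φ ∘ₗ LinearMap.single R (fun _ : Fin r => P) i)) (hjZ k z)
        rw [TensorProduct.smul_tmul', LinearMap.rTensor_tmul, h1, Push.glue, h2]
        rwa [LinearMap.rTensor_tmul, map_zero] at h3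
      | add x y hx hy => rw [smul_add, map_add, hx, hy, add_zero]
    refine Submodule.smul_le.2 fun b hb x _ => ?_
    rw [← ht] at hb
    rw [LinearMap.mem_ker]
    induction hb using Submodule.span_induction with
    | mem _ hb => obtain ⟨i, rfl⟩ := hb; exact key i x
    | zero => simp
    | add _ _ _ _ hb hc => rw [add_smul, map_add, hb, hc, add_zero]
    | smul c _ _ hb => rw [smul_assoc, map_smul, hb, smul_zero]
  let a : K →ₗ[R] Z →ₗ[R] ((K ⊗[R] Z) ⧸ p • (⊤ : Submodule R (K ⊗[R] Z))) :=
    (TensorProduct.mk R K Z).compr₂ (Submodule.mkQ _)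
  have ha : ∀ w, a (φ w) = (0 : (Fin r → P) →ₗ[R] _) (J w) := fun w => by
    ext z
    change Submodule.Quotient.mk (φ w ⊗ₜ[R] z) = 0
    rw [Submodule.Quotient.mk_eq_zero, hφ, TensorProduct.sum_tmul]
    refine Submodule.sum_mem _ fun i _ => ?_
    rw [← TensorProduct.smul_tmul']
    exact Submodule.smul_mem_smul (ht ▸ Ideal.subset_span ⟨i, rfl⟩) trivial
  refine h.retract (M := Push J φ ⊗[R] Z) (Submodule.liftQ _ _ hle)
    (TensorProduct.lift (Push.lift a 0 ha)) (fun u => ?_) (htens _ hE _ hZ)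
  obtain ⟨u, rfl⟩ := Submodule.Quotient.mk_surjective _ u
  rw [Submodule.liftQ_apply]
  induction u using TensorProduct.induction_on with
  | zero => simp
  | tmul k z => simp [a]
  | add x y hx hy => rw [map_add, map_add, hx, hy, Submodule.Quotient.mk_add]

/-- If `K` is nonzero at `p` and `Z` maps onto `R ⧸ p`, then `(K ⊗ Z) ⧸ p (K ⊗ Z)` is nonzero at
`p`: it maps onto `K ⧸ p K`. -/
theorem annihilator_quotient_tensor_le [p.IsPrime] [Module.Finite R K]
    (hK : Module.annihilator R K ≤ p) (f : Z →ₗ[R] R ⧸ p) (z₀ : Z) (hz₀ : f z₀ = 1) :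
    Module.annihilator R ((K ⊗[R] Z) ⧸ p • (⊤ : Submodule R (K ⊗[R] Z))) ≤ p := by
  intro s hs
  by_contra hsp
  let g : K ⊗[R] Z →ₗ[R] K ⧸ p • (⊤ : Submodule R K) :=
    (TensorProduct.tensorQuotEquivQuotSMul K p).toLinearMap ∘ₗ LinearMap.lTensor K f
  have hg : ∀ k, g (k ⊗ₜ z₀) = Submodule.Quotient.mk k := fun k => by
    rw [LinearMap.comp_apply, LinearMap.lTensor_tmul, hz₀, ← map_one (Ideal.Quotient.mk p),
      LinearEquiv.coe_coe, TensorProduct.tensorQuotEquivQuotSMul_tmul_mk, one_smul]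
  obtain ⟨s', hsout, hsK⟩ := exists_mem_annihilator_of_smul_mem (K := K) hsp fun k => by
    have h1 : s • (k ⊗ₜ[R] z₀) ∈ p • (⊤ : Submodule R (K ⊗[R] Z)) := by
      rw [← Submodule.Quotient.mk_eq_zero, Submodule.Quotient.mk_smul]
      exact Module.mem_annihilator.1 hs _
    have h2 := Submodule.mem_map_of_mem (f := g) h1
    rw [Submodule.map_smul'', map_smul, hg, ← Submodule.Quotient.mk_smul] at h2
    rw [← Submodule.Quotient.mk_eq_zero]
    have h3 : p • Submodule.map g ⊤ = ⊥ := by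
      refine eq_bot_iff.2 (Submodule.smul_le.2 fun a ha y _ => ?_)
      obtain ⟨k, rfl⟩ := Submodule.Quotient.mk_surjective _ y
      rw [← Submodule.Quotient.mk_smul, Submodule.mem_bot, Submodule.Quotient.mk_eq_zero]
      exact Submodule.smul_mem_smul ha trivial
    rwa [h3, Submodule.mem_bot] at h2
  exact hsout (hK hsK)

/-- A module that is nonzero at `p` needs at least one generator there. -/
theorem exists_index [p.IsPrime] {M : Type} [AddCommGroup M] [Module R M]
    (hM : Module.annihilator R M ≤ p) {W : Submodule R M} {m : ℕ} (x : Fin m → W)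
    (hx : Submodule.span R (Set.range x) = ⊤) {s : R} (hs : s ∉ p) (hsW : ∀ u, s • u ∈ W) :
    Nonempty (Fin m) := by
  by_contra hm
  rw [not_nonempty_iff] at hm
  rw [Set.range_eq_empty, Submodule.span_empty] at hx
  refine hs (hM (Module.mem_annihilator.2 fun u => ?_))
  have : (⟨s • u, hsW u⟩ : W) ∈ (⊥ : Submodule R W) := hx ▸ trivial
  exact congrArg Subtype.val ((Submodule.mem_bot R).1 this)

/-- A module killed by `p` and nonzero at `p` contains, up to a module vanishing at `p`, a copy of
`R ⧸ p` as a direct summand: a minimal generator at `p` spans one. -/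
theorem IsResolving.quotient_mem_of_killed [IsNoetherianRing R] [p.IsPrime] (h : IsResolving R 𝒳)
    (hq : ∀ q : PrimeSpectrum R, p < q.asIdeal → ModuleCat.of R (R ⧸ q.asIdeal) ∈ 𝒳)
    {U : Type} [AddCommGroup U] [Module R U] (hU : ModuleCat.of R U ∈ 𝒳)
    (hpU : p ≤ Module.annihilator R U) (hUp : Module.annihilator R U ≤ p) :
    ModuleCat.of R (R ⧸ p) ∈ 𝒳 := by
  obtain ⟨W, m, x, s, hs, hW, hsW, hx, hrel⟩ := h.exists_generated hq hU (n := 1) (by simpa)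
  obtain ⟨i⟩ := exists_index hUp x hx hs hsW
  obtain ⟨f, hf⟩ := exists_coordinate x hx hrel i
  obtain ⟨g, hg⟩ := exists_factor_of_ker_le p.mkQ p.mkQ_surjective
    (LinearMap.toSpanSingleton R W (x i)) fun a ha => by
      rw [LinearMap.toSpanSingleton_apply]
      exact Subtype.ext (Module.mem_annihilator.1
        (hpU ((Submodule.Quotient.mk_eq_zero p).1 ha)) (x i).1)
  refine h.retract g f (fun y => ?_) hW
  obtain ⟨y, rfl⟩ := p.mkQ_surjective y
  rw [hg, LinearMap.toSpanSingleton_apply, map_smul, hf]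
  have h1 : (1 : R ⧸ p) = p.mkQ 1 := rfl
  rw [h1, ← map_smul, smul_eq_mul, mul_one]

/-- The inductive step: `R ⧸ p ∈ 𝒳` when some module of `𝒳` is not free at `p` and `R ⧸ q ∈ 𝒳` for
all primes `q` strictly above `p`. -/
theorem IsResolving.quotient_mem_of_lt [IsNoetherianRing R] [IsLocalRing R] [p.IsPrime]
    (h : IsResolving R 𝒳) (htens : ClosedUnderTensor R 𝒳) (htr : ClosedUnderTranspose R 𝒳)
    (hq : ∀ q : PrimeSpectrum R, p < q.asIdeal → ModuleCat.of R (R ⧸ q.asIdeal) ∈ 𝒳)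
    (hex : ∃ X ∈ 𝒳, stabAnn R X ≤ p) : ModuleCat.of R (R ⧸ p) ∈ 𝒳 := by
  obtain ⟨L, hL, hLp, n, hn⟩ := exists_level h htens htr hex
  obtain ⟨C, hC, m, π, hπ, hcoef, hann⟩ := h.exists_cover hq (L := L) hL hLp hn
  have hK := h.ker π hπ (h.free (Fin m)) hC
  have hKfin := h.finite hK
  obtain ⟨Z, hZ, ⟨N, hN⟩, hZp, hkill⟩ := h.exists_killed htens hq (LinearMap.ker π).subtype π hπ
    (LinearMap.exact_subtype_ker_map π) hC (fun w i => hcoef w w.2 i)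
    ⟨n, L, hL, hn, fun s hs => hLp (mem_stabAnn_of_annihilator hs)⟩
  obtain ⟨W, r, x, s, hs, hW, hsW, hx, hrel⟩ := h.exists_generated hq (M := Z) hZ hN
  obtain ⟨i⟩ := exists_index hZp x hx hs hsW
  obtain ⟨f, hf⟩ := exists_coordinate x hx hrel i
  obtain ⟨r, t, ht⟩ := Submodule.fg_iff_exists_fin_generating_family.1
    ((isNoetherianRing_iff_ideal_fg R).1 ‹_› p)
  have hU := h.quotient_tensor_mem (Z := W) htens (LinearMap.ker π).subtype π
    Subtype.val_injective (LinearMap.exact_subtype_ker_map π) hπ hK hC hW (fun w z => by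
      rw [pi_eq_sum_univ' ((LinearMap.ker π).subtype w), TensorProduct.sum_tmul]
      refine Finset.sum_eq_zero fun i _ => ?_
      have hz : (LinearMap.ker π).subtype w i • z = 0 := Subtype.ext (hkill w i z.1)
      rw [TensorProduct.smul_tmul, hz, TensorProduct.tmul_zero]) t ht
  refine h.quotient_mem_of_killed hq hU (fun a ha => Module.mem_annihilator.2 fun u => ?_)
    (annihilator_quotient_tensor_le hann f (x i) hf)
  obtain ⟨u, rfl⟩ := Submodule.Quotient.mk_surjective _ u
  rw [← Submodule.Quotient.mk_smul, Submodule.Quotient.mk_eq_zero]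
  exact Submodule.smul_mem_smul ha trivial

/-- `R ⧸ q ∈ 𝒳` for every prime `q` in the nonfree locus of `𝒳`, by Noetherian induction. -/
theorem IsResolving.quotient_mem [IsNoetherianRing R] [IsLocalRing R]
    (h : IsResolving R 𝒳) (htens : ClosedUnderTensor R 𝒳) (htr : ClosedUnderTranspose R 𝒳)
    {X : ModuleCat.{0} R} (hX : X ∈ 𝒳) (q : PrimeSpectrum R) (hXq : stabAnn R X ≤ q.asIdeal) :
    ModuleCat.of R (R ⧸ q.asIdeal) ∈ 𝒳 := by
  induction q using (InvImage.wf PrimeSpectrum.asIdeal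
    (wellFounded_gt (α := Ideal R))).induction with
  | _ q ih =>
    exact h.quotient_mem_of_lt htens htr (fun q' hq' => ih q' hq' (hXq.trans hq'.le)) ⟨X, hX, hXq⟩

/-- A resolving subcategory closed under tensor products and transposes is determined by its
nonfree locus. -/
theorem IsResolving.Vinv_catNonfreeLocus [IsNoetherianRing R] [IsLocalRing R]
    (h : IsResolving R 𝒳) (htens : ClosedUnderTensor R 𝒳) (htr : ClosedUnderTranspose R 𝒳) :
    Vinv R (catNonfreeLocus R 𝒳) = 𝒳 := by
  ext M
  constructor
  · rintro ⟨hfin, hM⟩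
    refine h.mem_of_nonfreeLocus (M := M) fun q hq => ?_
    obtain ⟨X, hX, hXq⟩ := Set.mem_iUnion₂.1 (hM ((mem_nonfreeLocus_iff q).2 hq))
    have := h.fg X hX
    exact h.quotient_mem htens htr hX q ((mem_nonfreeLocus_iff q).1 hXq)
  · exact fun hM => ⟨h.fg M hM, fun q hq => Set.mem_iUnion₂.2 ⟨M, hM, hq⟩⟩

end ResidueRing

/-- Over a Cohen-Macaulay local ring, taking nonfree loci and `V⁻¹` are
mutually inverse bijections between resolving subcategories of `mod R` closed under tensor
products and transposes, and specialization-closed subsets of `Spec R` contained in `s(R)`. -/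
theorem classification_tensor_transpose
    (R : Type) [CommRing R] [IsNoetherianRing R] [IsLocalRing R]
    (hCM : IsCMLocalRing R) :
    (∀ 𝒳 : Set (ModuleCat.{0} R),
        IsResolving R 𝒳 → ClosedUnderTensor R 𝒳 → ClosedUnderTranspose R 𝒳 →
          SpecClosed R (catNonfreeLocus R 𝒳) ∧ catNonfreeLocus R 𝒳 ⊆ nonFieldLocus R) ∧
    (∀ Φ : Set (PrimeSpectrum R), SpecClosed R Φ → Φ ⊆ nonFieldLocus R →
        IsResolving R (Vinv R Φ) ∧ ClosedUnderTensor R (Vinv R Φ) ∧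
          ClosedUnderTranspose R (Vinv R Φ)) ∧
    (∀ 𝒳 : Set (ModuleCat.{0} R),
        IsResolving R 𝒳 → ClosedUnderTensor R 𝒳 → ClosedUnderTranspose R 𝒳 →
          Vinv R (catNonfreeLocus R 𝒳) = 𝒳) ∧
    (∀ Φ : Set (PrimeSpectrum R), SpecClosed R Φ → Φ ⊆ nonFieldLocus R →
        catNonfreeLocus R (Vinv R Φ) = Φ) := by
  refine ⟨fun 𝒳 h _ _ =>
      ⟨specClosed_catNonfreeLocus 𝒳 h.fg, catNonfreeLocus_subset_nonFieldLocus 𝒳⟩,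
    fun Φ _ _ => ⟨isResolving_Vinv Φ, closedUnderTensor_Vinv Φ, closedUnderTranspose_Vinv Φ⟩,
    fun 𝒳 h ht htr => h.Vinv_catNonfreeLocus ht htr, fun Φ hΦ hs => catNonfreeLocus_Vinv Φ hΦ hs⟩

end
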